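/- arXiv:2505.11273 — 13 statements merged into one kernel-verified Lean document; each statement's English description precedes it below -/
import Mathlib

section
/- Adding the valid inequalities (q_p + d_p − a_p^⊤x)/‖b_p‖_* ≥ s does not change the x-feasible region of the exact reformulation: X_Exact = {x ∈ X : ∃ s ∈ ℝ, r ∈ ℝ^N with s ≥ 0, r_i ≥ 0 for all i, εNs − Σ_{i∈[N]} r_i ≥ θN, (f_{i,p}(x))^+ ≥ s − r_i for all i ∈ [N], p ∈ [P], and (q_p + d_p − a_p^⊤x)/‖b_p‖_* ≥ s for all p ∈ [P]}. -/
theorem stmt_0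
    (N K L P : ℕ) (hN : 0 < N) (hK : 0 < K) (hL : 0 < L) (hP : 0 < P)
    (nrm : (Fin K → ℝ) → ℝ)
    (nrm_eq_zero : ∀ u : Fin K → ℝ, nrm u = 0 ↔ u = 0)
    (nrm_smul : ∀ (c : ℝ) (u : Fin K → ℝ), nrm (c • u) = |c| * nrm u)
    (nrm_triangle : ∀ u w : Fin K → ℝ, nrm (u + w) ≤ nrm u + nrm w)
    (dstar : (Fin K → ℝ) → ℝ)
    (hdstar : ∀ v : Fin K → ℝ,
      dstar v = sSup ((fun u : Fin K → ℝ => ∑ j, v j * u j) '' {u | nrm u ≤ 1}))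
    (ξ : Fin N → Fin K → ℝ)
    (a : Fin P → Fin L → ℝ) (b : Fin P → Fin K → ℝ) (hb : ∀ p, b p ≠ 0)
    (d : Fin P → ℝ)
    (ε θ : ℝ) (hε0 : 0 < ε) (hε1 : ε < 1) (hθ : 0 < θ)
    (k : ℕ) (hk : k = ⌊ε * (N : ℝ)⌋₊) (hkN : k < N)
    (X : Set (Fin L → ℝ))
    (f : Fin N → Fin P → (Fin L → ℝ) → ℝ)
    (hf : ∀ i p x, f i p x =
      ((∑ j, b p j * ξ i j) + d p - ∑ j, a p j * x j) / dstar (b p))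
    (q : Fin P → ℝ)
    (hq : ∀ p, q p =
      ((fun i => ∑ j, b p j * ξ i j) ∘ Tuple.sort (fun i => ∑ j, b p j * ξ i j)) ⟨k, hkN⟩)
    (XExact : Set (Fin L → ℝ))
    (hXExact : XExact = {x | x ∈ X ∧ ∃ s : ℝ, ∃ r : Fin N → ℝ,
      0 ≤ s ∧ (∀ i, 0 ≤ r i) ∧
      ε * (N : ℝ) * s - ∑ i, r i ≥ θ * (N : ℝ) ∧
      ∀ i p, max (f i p x) 0 ≥ s - r i})
    :
    XExact = {x | x ∈ X ∧ ∃ s : ℝ, ∃ r : Fin N → ℝ,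
      0 ≤ s ∧ (∀ i, 0 ≤ r i) ∧
      ε * (N : ℝ) * s - ∑ i, r i ≥ θ * (N : ℝ) ∧
      (∀ i p, max (f i p x) 0 ≥ s - r i) ∧
      ∀ p, (q p + d p - ∑ j, a p j * x j) / dstar (b p) ≥ s} := by
  have hds : ∀ v, 0 ≤ dstar v := by
    intro v
    rw [hdstar]
    by_cases hB : BddAbove ((fun u : Fin K → ℝ => ∑ j, v j * u j) '' {u | nrm u ≤ 1})
    · refine le_csSup hB ⟨0, ?_, by simp⟩
      have := (nrm_eq_zero 0).2 rfl
      simp only [Set.mem_setOf_eq]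
      linarith
    · rw [Real.sSup_of_not_bddAbove hB]
  have hkε : ε * (N : ℝ) < (k : ℝ) + 1 := by
    rw [hk]; exact Nat.lt_floor_add_one _
  have hθN : 0 < θ * (N : ℝ) := mul_pos hθ (by exact_mod_cast hN)
  rw [hXExact]
  ext x
  simp only [Set.mem_setOf_eq]
  constructor
  swap
  · rintro ⟨hx, s, r, h1, h2, h3, h4, -⟩
    exact ⟨hx, s, r, h1, h2, h3, h4⟩
  rintro ⟨hx, s, r, hs, hr, hsum, hm⟩
  refine ⟨hx, ?_⟩
  obtain ⟨g, hg⟩ : ∃ g : Fin P → ℝ,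
      ∀ p, g p = (q p + d p - ∑ j, a p j * x j) / dstar (b p) := ⟨_, fun p => rfl⟩
  simp only [← hg]
  haveI : Nonempty (Fin P) := ⟨⟨0, hP⟩⟩
  obtain ⟨p, hp⟩ := Finite.exists_min g
  by_cases hgs : s ≤ g p
  · exact ⟨s, r, hs, hr, hsum, hm, fun p' => hgs.trans (hp p')⟩
  push Not at hgs
  -- the k+1 indices with small value
  obtain ⟨J, hJc, hJ⟩ : ∃ J : Finset (Fin N), J.card = k + 1 ∧ ∀ i ∈ J, f i p x ≤ g p := by
    refine ⟨(Finset.Iic (⟨k, hkN⟩ : Fin N)).map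
      (Tuple.sort (fun i => ∑ j, b p j * ξ i j)).toEmbedding, by simp, ?_⟩
    intro i hi
    obtain ⟨j, hj, rfl⟩ := Finset.mem_map.1 hi
    have hmono := Tuple.monotone_sort (fun i => ∑ j, b p j * ξ i j) (Finset.mem_Iic.1 hj)
    rw [← hq p] at hmono
    rw [hf, hg]
    apply div_le_div_of_nonneg_right _ (hds _)
    simp only [Function.comp_apply] at hmono
    simp only [Equiv.coe_toEmbedding]
    linarith
  have key : ∀ s' : ℝ, s' = max (g p) 0 → s' ≤ s →
      ε * (N : ℝ) * s' - ∑ i, max (r i - (s - s')) 0 ≥ θ * (N : ℝ) := by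
    intro s' hs' hle
    have h1 : ∑ i, (if i ∈ J then (s - s') else 0)
        ≤ ∑ i, (r i - max (r i - (s - s')) 0) := by
      apply Finset.sum_le_sum
      intro i _
      split_ifs with hi
      · have h2 := hm i p
        have h3 : max (f i p x) 0 ≤ s' := hs' ▸ max_le_max_right 0 (hJ i hi)
        rw [max_eq_left (by linarith)]
        linarith
      · have := hr i
        have : max (r i - (s - s')) 0 ≤ r i := max_le (by linarith) this
        linarith
    rw [Finset.sum_sub_distrib, Finset.sum_ite_mem, Finset.univ_inter, Finset.sum_const, hJc,
      nsmul_eq_mul] at h1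
    push_cast at h1
    nlinarith [mul_nonneg (sub_nonneg.2 hkε.le) (sub_nonneg.2 hle)]
  have hmax := key _ rfl (max_le hgs.le hs)
  have hg0 : 0 ≤ g p := by
    by_contra hneg
    rw [max_eq_right (not_le.1 hneg).le] at hmax
    have : 0 ≤ ∑ i, max (r i - (s - 0)) 0 := Finset.sum_nonneg fun i _ => le_max_right _ _
    linarith
  rw [max_eq_left hg0] at hmax
  refine ⟨g p, fun i => max (r i - (s - g p)) 0, hg0, fun i => le_max_right _ _, hmax, ?_,
    fun p' => hp p'⟩
  intro i p'
  have h1 := hm i p'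
  have h2 := le_max_left (r i - (s - g p)) 0
  linarith
end

section
/- For every κ ∈ [0,1]^N, the Linear Approximation and the Strengthened Linear Approximation have the same x-feasible region: X_LA(κ) = X_SLA(κ). -/
theorem stmt_2
    (N K L P : ℕ) (hN : 0 < N) (hK : 0 < K) (hL : 0 < L) (hP : 0 < P)
    (nrm : (Fin K → ℝ) → ℝ)
    (nrm_eq_zero : ∀ u : Fin K → ℝ, nrm u = 0 ↔ u = 0)
    (nrm_smul : ∀ (c : ℝ) (u : Fin K → ℝ), nrm (c • u) = |c| * nrm u)
    (nrm_triangle : ∀ u w : Fin K → ℝ, nrm (u + w) ≤ nrm u + nrm w)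
    (dstar : (Fin K → ℝ) → ℝ)
    (hdstar : ∀ v : Fin K → ℝ,
      dstar v = sSup ((fun u : Fin K → ℝ => ∑ j, v j * u j) '' {u | nrm u ≤ 1}))
    (ξ : Fin N → Fin K → ℝ)
    (a : Fin P → Fin L → ℝ) (b : Fin P → Fin K → ℝ) (hb : ∀ p, b p ≠ 0)
    (d : Fin P → ℝ)
    (ε θ : ℝ) (hε0 : 0 < ε) (hε1 : ε < 1) (hθ : 0 < θ)
    (k : ℕ) (hk : k = ⌊ε * (N : ℝ)⌋₊) (hkN : k < N)
    (X : Set (Fin L → ℝ))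
    (f : Fin N → Fin P → (Fin L → ℝ) → ℝ)
    (hf : ∀ i p x, f i p x =
      ((∑ j, b p j * ξ i j) + d p - ∑ j, a p j * x j) / dstar (b p))
    (q : Fin P → ℝ)
    (hq : ∀ p, q p =
      ((fun i => ∑ j, b p j * ξ i j) ∘ Tuple.sort (fun i => ∑ j, b p j * ξ i j)) ⟨k, hkN⟩)
    (XLA : (Fin N → ℝ) → Set (Fin L → ℝ))
    (hXLA : ∀ κ : Fin N → ℝ, XLA κ = {x | x ∈ X ∧ ∃ s : ℝ, ∃ r : Fin N → ℝ,
      0 ≤ s ∧ (∀ i, 0 ≤ r i) ∧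
      ε * (N : ℝ) * s - ∑ i, r i ≥ θ * (N : ℝ) ∧
      ∀ i p, κ i * f i p x ≥ s - r i})
    (XSLA : (Fin N → ℝ) → Set (Fin L → ℝ))
    (hXSLA : ∀ κ : Fin N → ℝ, XSLA κ = {x | x ∈ X ∧ ∃ s : ℝ, ∃ r : Fin N → ℝ,
      0 ≤ s ∧ (∀ i, 0 ≤ r i) ∧
      ε * (N : ℝ) * s - ∑ i, r i ≥ θ * (N : ℝ) ∧
      (∀ i p, κ i * f i p x ≥ s - r i) ∧
      ∀ p, (q p + d p - ∑ j, a p j * x j) / dstar (b p) ≥ s})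
    :
    ∀ κ : Fin N → ℝ, (∀ i, 0 ≤ κ i ∧ κ i ≤ 1) → XLA κ = XSLA κ := by
  intro κ hκ
  have hd : ∀ v, 0 ≤ dstar v := by
    intro v
    rw [hdstar]
    refine Real.sSup_nonneg' ⟨0, ⟨0, ?_, by simp⟩, le_rfl⟩
    have h0 : nrm 0 = 0 := (nrm_eq_zero 0).2 rfl
    simp [h0]
  rw [hXLA, hXSLA]
  ext x
  simp only [Set.mem_setOf_eq]
  constructor
  swap
  · rintro ⟨hx, s, r, h1, h2, h3, h4, -⟩
    exact ⟨hx, s, r, h1, h2, h3, h4⟩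
  rintro ⟨hx, s, r, h1, h2, h3, h4⟩
  refine ⟨hx, ?_⟩
  set F : Fin P → ℝ := fun p => (q p + d p - ∑ j, a p j * x j) / dstar (b p) with hF
  haveI : Nonempty (Fin P) := ⟨⟨0, hP⟩⟩
  obtain ⟨p0, hp0⟩ := Finite.exists_min F
  by_cases hs : s ≤ F p0
  · exact ⟨s, r, h1, h2, h3, h4, fun p => hs.trans (hp0 p)⟩
  push Not at hs
  have hNpos : (0 : ℝ) < N := by exact_mod_cast hN
  have hpos : 0 < θ * (N : ℝ) := mul_pos hθ hNpos
  have hkey : ∀ s', F p0 ≤ s' → 0 ≤ s' → s' ≤ s →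
      ε * (N : ℝ) * s' - ∑ i, max (r i - (s - s')) 0 ≥ θ * (N : ℝ) := by
    intro s' hFs hs0 hss
    set g : Fin N → ℝ := fun i => r i - max (r i - (s - s')) 0 with hg
    have hg0 : ∀ i, 0 ≤ g i := by
      intro i
      have := h2 i
      simp only [hg, sub_nonneg]
      exact max_le (by linarith) this
    set y : Fin N → ℝ := fun i => ∑ j, b p0 j * ξ i j with hy
    have hgk : ∀ j : Fin N, j ∈ Finset.Iic (⟨k, hkN⟩ : Fin N) → s - s' ≤ g (Tuple.sort y j) := by
      intro j hj
      have hm : y (Tuple.sort y j) ≤ q p0 := by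
        rw [hq]
        exact Tuple.monotone_sort y (Finset.mem_Iic.1 hj)
      have hfF : f (Tuple.sort y j) p0 x ≤ F p0 := by
        rw [hf]
        refine div_le_div_of_nonneg_right ?_ (hd _)
        simp only [hy] at hm ⊢
        linarith
      have h5 := h4 (Tuple.sort y j) p0
      obtain ⟨k0, k1⟩ := hκ (Tuple.sort y j)
      have h6 : κ (Tuple.sort y j) * f (Tuple.sort y j) p0 x ≤ s' := by
        nlinarith [mul_le_mul_of_nonneg_left (hfF.trans hFs) k0]
      simp only [hg]
      rw [max_eq_left (by linarith)]
      linarith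
    have hsum : ((k : ℝ) + 1) * (s - s') ≤ ∑ i, g i := by
      rw [← Equiv.sum_comp (Tuple.sort y) g]
      have e1 := Finset.card_nsmul_le_sum _ (fun j => g (Tuple.sort y j)) _ hgk
      have e2 := Finset.sum_le_sum_of_subset_of_nonneg
        (Finset.subset_univ (Finset.Iic (⟨k, hkN⟩ : Fin N)))
        (f := fun j => g (Tuple.sort y j)) (fun j _ _ => hg0 _)
      rw [Fin.card_Iic, nsmul_eq_mul] at e1
      push_cast at e1
      exact e1.trans e2
    have hfl : ε * (N : ℝ) ≤ (k : ℝ) + 1 := by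
      rw [hk]
      exact (Nat.lt_floor_add_one _).le
    have hm := mul_le_mul_of_nonneg_right hfl (sub_nonneg.2 hss)
    have hgs : ∑ i, g i = ∑ i, r i - ∑ i, max (r i - (s - s')) 0 := by
      simp only [hg, Finset.sum_sub_distrib]
    nlinarith
  have hF0 : 0 ≤ F p0 := by
    by_contra hneg
    push Not at hneg
    have h7 := hkey 0 hneg.le le_rfl h1
    have h8 : 0 ≤ ∑ i, max (r i - (s - 0)) 0 := Finset.sum_nonneg fun i _ => le_max_right _ _
    linarith
  refine ⟨F p0, fun i => max (r i - (s - F p0)) 0, hF0, fun i => le_max_right _ _,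
    hkey _ le_rfl hF0 hs.le, ?_, hp0⟩
  intro i p
  have h9 := h4 i p
  have h10 := le_max_left (r i - (s - F p0)) 0
  simp only [ge_iff_le] at h9 ⊢
  linarith
end

section
/- For every κ ∈ [0,1]^N, the following relationship holds: X_LA(κ) = X_SLA(κ) ⊆ X_SFLA(κ). -/
theorem stmt_3
    (N K L P : ℕ) (hN : 0 < N) (hK : 0 < K) (hL : 0 < L) (hP : 0 < P)
    (nrm : (Fin K → ℝ) → ℝ)
    (nrm_eq_zero : ∀ u : Fin K → ℝ, nrm u = 0 ↔ u = 0)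
    (nrm_smul : ∀ (c : ℝ) (u : Fin K → ℝ), nrm (c • u) = |c| * nrm u)
    (nrm_triangle : ∀ u w : Fin K → ℝ, nrm (u + w) ≤ nrm u + nrm w)
    (dstar : (Fin K → ℝ) → ℝ)
    (hdstar : ∀ v : Fin K → ℝ,
      dstar v = sSup ((fun u : Fin K → ℝ => ∑ j, v j * u j) '' {u | nrm u ≤ 1}))
    (ξ : Fin N → Fin K → ℝ)
    (a : Fin P → Fin L → ℝ) (b : Fin P → Fin K → ℝ) (hb : ∀ p, b p ≠ 0)
    (d : Fin P → ℝ)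
    (ε θ : ℝ) (hε0 : 0 < ε) (hε1 : ε < 1) (hθ : 0 < θ)
    (k : ℕ) (hk : k = ⌊ε * (N : ℝ)⌋₊) (hkN : k < N)
    (X : Set (Fin L → ℝ))
    (f : Fin N → Fin P → (Fin L → ℝ) → ℝ)
    (hf : ∀ i p x, f i p x =
      ((∑ j, b p j * ξ i j) + d p - ∑ j, a p j * x j) / dstar (b p))
    (q : Fin P → ℝ)
    (hq : ∀ p, q p =
      ((fun i => ∑ j, b p j * ξ i j) ∘ Tuple.sort (fun i => ∑ j, b p j * ξ i j)) ⟨k, hkN⟩)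
    (XLA : (Fin N → ℝ) → Set (Fin L → ℝ))
    (hXLA : ∀ κ : Fin N → ℝ, XLA κ = {x | x ∈ X ∧ ∃ s : ℝ, ∃ r : Fin N → ℝ,
      0 ≤ s ∧ (∀ i, 0 ≤ r i) ∧
      ε * (N : ℝ) * s - ∑ i, r i ≥ θ * (N : ℝ) ∧
      ∀ i p, κ i * f i p x ≥ s - r i})
    (XSLA : (Fin N → ℝ) → Set (Fin L → ℝ))
    (hXSLA : ∀ κ : Fin N → ℝ, XSLA κ = {x | x ∈ X ∧ ∃ s : ℝ, ∃ r : Fin N → ℝ,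
      0 ≤ s ∧ (∀ i, 0 ≤ r i) ∧
      ε * (N : ℝ) * s - ∑ i, r i ≥ θ * (N : ℝ) ∧
      (∀ i p, κ i * f i p x ≥ s - r i) ∧
      ∀ p, (q p + d p - ∑ j, a p j * x j) / dstar (b p) ≥ s})
    (XSFLA : (Fin N → ℝ) → Set (Fin L → ℝ))
    (hXSFLA : ∀ κ : Fin N → ℝ, XSFLA κ = {x | x ∈ X ∧ ∃ s : ℝ, ∃ r : Fin N → ℝ,
      0 ≤ s ∧ (∀ i, 0 ≤ r i) ∧
      ε * (N : ℝ) * s - ∑ i, r i ≥ θ * (N : ℝ) ∧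
      (∀ p, ∀ i, (∑ j, b p j * ξ i j) < q p → κ i * f i p x ≥ s - r i) ∧
      ∀ p, (q p + d p - ∑ j, a p j * x j) / dstar (b p) ≥ s})
    :
    ∀ κ : Fin N → ℝ, (∀ i, 0 ≤ κ i ∧ κ i ≤ 1) →
      XLA κ = XSLA κ ∧ XSLA κ ⊆ XSFLA κ := by
  intro κ hκ
  have hd : ∀ p, 0 ≤ dstar (b p) := by
    intro p
    rw [hdstar]
    apply Real.sSup_nonneg'
    refine ⟨0, ⟨0, ?_, by simp⟩, le_refl _⟩
    have : nrm 0 = 0 := (nrm_eq_zero 0).2 rfl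
    simp [this]
  have hNr : (0 : ℝ) < N := by exact_mod_cast hN
  have hkε : ε * (N : ℝ) < (k : ℝ) + 1 := by
    rw [hk]
    exact Nat.lt_floor_add_one _
  refine ⟨Set.Subset.antisymm ?_ ?_, ?_⟩
  · rw [hXLA, hXSLA]
    rintro x ⟨hx, s, r, hs, hr, hsum, hc⟩
    refine ⟨hx, ?_⟩
    haveI : Nonempty (Fin P) := ⟨⟨0, hP⟩⟩
    obtain ⟨p, hp⟩ := Finite.exists_min
      (fun p => (q p + d p - ∑ j, a p j * x j) / dstar (b p))
    set m := (q p + d p - ∑ j, a p j * x j) / dstar (b p) with hm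
    by_cases hsm : s ≤ m
    · exact ⟨s, r, hs, hr, hsum, hc, fun p' => hsm.trans (hp p')⟩
    push Not at hsm
    obtain ⟨T, hTcard, hT⟩ : ∃ T : Finset (Fin N), T.card = k + 1 ∧
        ∀ i ∈ T, (∑ j, b p j * ξ i j) ≤ q p := by
      refine ⟨(Finset.Iic (⟨k, hkN⟩ : Fin N)).map
        (Tuple.sort (fun i => ∑ j, b p j * ξ i j)).toEmbedding, by simp, ?_⟩
      intro i hi
      rw [Finset.mem_map] at hi
      obtain ⟨l, hl, rfl⟩ := hi
      rw [hq]
      exact Tuple.monotone_sort (fun i => ∑ j, b p j * ξ i j) (Finset.mem_Iic.1 hl)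
    set δ := s - max m 0 with hδ
    have hδ0 : 0 ≤ δ := by
      rw [hδ]
      exact sub_nonneg.2 (max_le hsm.le hs)
    have hTr : ∀ i ∈ T, δ ≤ r i := by
      intro i hi
      have h1 : f i p x ≤ m := by
        rw [hf, hm]
        have := hT i hi
        exact div_le_div_of_nonneg_right (by linarith) (hd p)
      have h2 : κ i * f i p x ≤ max m 0 := by
        have h3 : κ i * f i p x ≤ κ i * max m 0 :=
          mul_le_mul_of_nonneg_left (h1.trans (le_max_left _ _)) (hκ i).1
        have h4 : κ i * max m 0 ≤ 1 * max m 0 :=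
          mul_le_mul_of_nonneg_right (hκ i).2 (le_max_right _ _)
        linarith
      have := hc i p
      linarith
    have hS : ∑ i, max (r i - δ) 0 ≤ ∑ i, r i - ((k : ℝ) + 1) * δ := by
      have e : ∑ i, (if i ∈ T then δ else 0) = ((k : ℝ) + 1) * δ := by
        rw [Finset.sum_ite_mem, Finset.univ_inter, Finset.sum_const, hTcard]
        simp
      rw [← e, ← Finset.sum_sub_distrib]
      apply Finset.sum_le_sum
      intro i _
      split_ifs with h
      · exact max_le le_rfl (sub_nonneg.2 (hTr i h))
      · rw [sub_zero]
        exact max_le (by linarith) (hr i)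
    have hmain : ε * (N : ℝ) * max m 0 - ∑ i, max (r i - δ) 0 ≥ θ * (N : ℝ) := by
      have h1 : ε * (N : ℝ) * δ ≤ ((k : ℝ) + 1) * δ :=
        mul_le_mul_of_nonneg_right hkε.le hδ0
      have h2 : ε * (N : ℝ) * max m 0 = ε * (N : ℝ) * s - ε * (N : ℝ) * δ := by
        rw [hδ]; ring
      linarith
    have hr' : ∀ i, 0 ≤ max (r i - δ) 0 := fun i => le_max_right _ _
    have hm0 : 0 ≤ m := by
      by_contra h
      push Not at h
      rw [max_eq_right h.le] at hmain
      have h1 : 0 ≤ ∑ i, max (r i - δ) 0 := Finset.sum_nonneg fun i _ => hr' i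
      have h2 : 0 < θ * (N : ℝ) := mul_pos hθ hNr
      linarith
    refine ⟨max m 0, fun i => max (r i - δ) 0, le_max_right _ _, hr', hmain, ?_, ?_⟩
    · intro i p'
      have := hc i p'
      have h1 := le_max_left (r i - δ) 0
      simp only
      linarith
    · intro p'
      rw [max_eq_left hm0]
      exact hp p'
  · rw [hXLA, hXSLA]
    rintro x ⟨hx, s, r, hs, hr, hsum, hc, _⟩
    exact ⟨hx, s, r, hs, hr, hsum, hc⟩
  · rw [hXSLA, hXSFLA]
    rintro x ⟨hx, s, r, hs, hr, hsum, hc, hq'⟩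
    exact ⟨hx, s, r, hs, hr, hsum, fun p i _ => hc i p, hq'⟩
end

section
/- Under the parameter setting κ = 𝟙 := (1,…,1) ∈ ℝ^N, the feasible regions of the Linear Approximation, the Strengthened Linear Approximation, and the Strengthened and Faster Linear Approximation coincide: X_LA(𝟙) = X_SLA(𝟙) = X_SFLA(𝟙). -/
theorem stmt_4
    (N K L P : ℕ) (hN : 0 < N) (hK : 0 < K) (hL : 0 < L) (hP : 0 < P)
    (nrm : (Fin K → ℝ) → ℝ)
    (nrm_eq_zero : ∀ u : Fin K → ℝ, nrm u = 0 ↔ u = 0)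
    (nrm_smul : ∀ (c : ℝ) (u : Fin K → ℝ), nrm (c • u) = |c| * nrm u)
    (nrm_triangle : ∀ u w : Fin K → ℝ, nrm (u + w) ≤ nrm u + nrm w)
    (dstar : (Fin K → ℝ) → ℝ)
    (hdstar : ∀ v : Fin K → ℝ,
      dstar v = sSup ((fun u : Fin K → ℝ => ∑ j, v j * u j) '' {u | nrm u ≤ 1}))
    (ξ : Fin N → Fin K → ℝ)
    (a : Fin P → Fin L → ℝ) (b : Fin P → Fin K → ℝ) (hb : ∀ p, b p ≠ 0)
    (d : Fin P → ℝ)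
    (ε θ : ℝ) (hε0 : 0 < ε) (hε1 : ε < 1) (hθ : 0 < θ)
    (k : ℕ) (hk : k = ⌊ε * (N : ℝ)⌋₊) (hkN : k < N)
    (X : Set (Fin L → ℝ))
    (f : Fin N → Fin P → (Fin L → ℝ) → ℝ)
    (hf : ∀ i p x, f i p x =
      ((∑ j, b p j * ξ i j) + d p - ∑ j, a p j * x j) / dstar (b p))
    (q : Fin P → ℝ)
    (hq : ∀ p, q p =
      ((fun i => ∑ j, b p j * ξ i j) ∘ Tuple.sort (fun i => ∑ j, b p j * ξ i j)) ⟨k, hkN⟩)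
    (XLA : (Fin N → ℝ) → Set (Fin L → ℝ))
    (hXLA : ∀ κ : Fin N → ℝ, XLA κ = {x | x ∈ X ∧ ∃ s : ℝ, ∃ r : Fin N → ℝ,
      0 ≤ s ∧ (∀ i, 0 ≤ r i) ∧
      ε * (N : ℝ) * s - ∑ i, r i ≥ θ * (N : ℝ) ∧
      ∀ i p, κ i * f i p x ≥ s - r i})
    (XSLA : (Fin N → ℝ) → Set (Fin L → ℝ))
    (hXSLA : ∀ κ : Fin N → ℝ, XSLA κ = {x | x ∈ X ∧ ∃ s : ℝ, ∃ r : Fin N → ℝ,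
      0 ≤ s ∧ (∀ i, 0 ≤ r i) ∧
      ε * (N : ℝ) * s - ∑ i, r i ≥ θ * (N : ℝ) ∧
      (∀ i p, κ i * f i p x ≥ s - r i) ∧
      ∀ p, (q p + d p - ∑ j, a p j * x j) / dstar (b p) ≥ s})
    (XSFLA : (Fin N → ℝ) → Set (Fin L → ℝ))
    (hXSFLA : ∀ κ : Fin N → ℝ, XSFLA κ = {x | x ∈ X ∧ ∃ s : ℝ, ∃ r : Fin N → ℝ,
      0 ≤ s ∧ (∀ i, 0 ≤ r i) ∧
      ε * (N : ℝ) * s - ∑ i, r i ≥ θ * (N : ℝ) ∧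
      (∀ p, ∀ i, (∑ j, b p j * ξ i j) < q p → κ i * f i p x ≥ s - r i) ∧
      ∀ p, (q p + d p - ∑ j, a p j * x j) / dstar (b p) ≥ s})
    :
    XLA (fun _ => 1) = XSLA (fun _ => 1) ∧ XSLA (fun _ => 1) = XSFLA (fun _ => 1) := by
  have hD : ∀ v, 0 ≤ dstar v := by
    intro v
    rw [hdstar]
    refine Real.sSup_nonneg' ⟨0, ⟨0, ?_, by simp⟩, le_rfl⟩
    have h0 : nrm 0 = 0 := (nrm_eq_zero 0).2 rfl
    simp [h0]
  have hmono : ∀ p (x : Fin L → ℝ) (t u : ℝ), t ≤ u →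
      (t + d p - ∑ j, a p j * x j) / dstar (b p) ≤ (u + d p - ∑ j, a p j * x j) / dstar (b p) := by
    intro p x t u h
    exact div_le_div_of_nonneg_right (by linarith) (hD _)
  have hNpos : (0 : ℝ) < N := by exact_mod_cast hN
  have hkε : ε * (N : ℝ) < k + 1 := by
    rw [hk]
    exact Nat.lt_floor_add_one _
  rw [hXLA, hXSLA, hXSFLA]
  refine ⟨Set.Subset.antisymm ?_ ?_, Set.Subset.antisymm ?_ ?_⟩
  · rintro x ⟨hx, s, r, hs, hr, hsum, hc⟩
    refine ⟨hx, ?_⟩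
    haveI : Nonempty (Fin P) := ⟨⟨0, hP⟩⟩
    obtain ⟨p, hp⟩ := Finite.exists_min
      (fun p => (q p + d p - ∑ j, a p j * x j) / dstar (b p))
    obtain ⟨m, hm⟩ : ∃ m, m = (q p + d p - ∑ j, a p j * x j) / dstar (b p) := ⟨_, rfl⟩
    rw [← hm] at hp
    by_cases hsm : s ≤ m
    · exact ⟨s, r, hs, hr, hsum, hc, fun p' => le_trans hsm (hp p')⟩
    push Not at hsm
    let σ := Tuple.sort (fun i => ∑ j, b p j * ξ i j)
    have key : ∀ j : Fin N, j ≤ ⟨k, hkN⟩ → s - m ≤ r (σ j) := by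
      intro j hj
      have h1 := Tuple.monotone_sort (fun i => ∑ j, b p j * ξ i j) hj
      rw [← hq p] at h1
      have h2 := hmono p x _ _ h1
      have h3 := hc (σ j) p
      rw [hf, one_mul] at h3
      have h4 : (∑ l, b p l * ξ (σ j) l + d p - ∑ j, a p j * x j) / dstar (b p) ≤ m := by
        rw [hm]; exact h2
      linarith
    have hle : ∑ i, max (r i - (s - m)) 0 ≤ ∑ i, r i - (k + 1) * (s - m) := by
      rw [← Equiv.sum_comp σ, ← Equiv.sum_comp σ r]
      have h5 : ∑ j : Fin N, (if j ≤ ⟨k, hkN⟩ then s - m else 0) = (k + 1) * (s - m) := by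
        rw [← Finset.sum_filter, Finset.sum_const]
        have : (Finset.univ.filter fun j : Fin N => j ≤ ⟨k, hkN⟩) = Finset.Iic ⟨k, hkN⟩ := by
          ext; simp
        rw [this, Fin.card_Iic]
        simp
      rw [← h5, ← Finset.sum_sub_distrib]
      refine Finset.sum_le_sum fun j _ => ?_
      split_ifs with h
      · have := key j h
        exact max_le le_rfl (by linarith)
      · exact max_le (by linarith) (by linarith [hr (σ j)])
    have hfin : ε * (N : ℝ) * m - ∑ i, max (r i - (s - m)) 0 ≥ θ * (N : ℝ) := by
      nlinarith [mul_pos (sub_pos.2 hkε) (sub_pos.2 hsm)]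
    refine ⟨m, fun i => max (r i - (s - m)) 0, ?_, fun i => le_max_right _ _, hfin, ?_, hp⟩
    · have h6 : 0 ≤ ∑ i, max (r i - (s - m)) 0 :=
        Finset.sum_nonneg fun i _ => le_max_right _ _
      have h7 : 0 < θ * (N : ℝ) := mul_pos hθ hNpos
      have h8 : 0 < ε * (N : ℝ) := mul_pos hε0 hNpos
      have h9 : 0 < ε * (N : ℝ) * m := by linarith
      exact ((mul_pos_iff_of_pos_left h8).1 h9).le
    · intro i p'
      have h1 := hc i p'
      have h2 := le_max_left (r i - (s - m)) 0
      simp only at h1 ⊢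
      linarith
  · rintro x ⟨hx, s, r, hs, hr, hsum, hc, _⟩
    exact ⟨hx, s, r, hs, hr, hsum, hc⟩
  · rintro x ⟨hx, s, r, hs, hr, hsum, hc, hQ⟩
    exact ⟨hx, s, r, hs, hr, hsum, fun p i _ => hc i p, hQ⟩
  · rintro x ⟨hx, s, r, hs, hr, hsum, hc, hQ⟩
    refine ⟨hx, s, r, hs, hr, hsum, fun i p => ?_, hQ⟩
    by_cases h : (∑ j, b p j * ξ i j) < q p
    · exact hc p i h
    · have h1 := hmono p x _ _ (not_lt.1 h)
      rw [hf, one_mul]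
      have := hQ p
      have := hr i
      linarith
end

section
/- The equivalence X_SLA(𝟙) = X_Exact holds (with 𝟙 := (1,…,1) ∈ ℝ^N) under either of the following conditions: (1) ξ_i ∈ S(x) for all i ∈ [N] and all x ∈ X_Exact; or (2) ε ≤ 1/N. -/
theorem stmt_6
    (N K L P : ℕ) (hN : 0 < N) (hK : 0 < K) (hL : 0 < L) (hP : 0 < P)
    (nrm : (Fin K → ℝ) → ℝ)
    (nrm_eq_zero : ∀ u : Fin K → ℝ, nrm u = 0 ↔ u = 0)
    (nrm_smul : ∀ (c : ℝ) (u : Fin K → ℝ), nrm (c • u) = |c| * nrm u)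
    (nrm_triangle : ∀ u w : Fin K → ℝ, nrm (u + w) ≤ nrm u + nrm w)
    (dstar : (Fin K → ℝ) → ℝ)
    (hdstar : ∀ v : Fin K → ℝ,
      dstar v = sSup ((fun u : Fin K → ℝ => ∑ j, v j * u j) '' {u | nrm u ≤ 1}))
    (ξ : Fin N → Fin K → ℝ)
    (a : Fin P → Fin L → ℝ) (b : Fin P → Fin K → ℝ) (hb : ∀ p, b p ≠ 0)
    (d : Fin P → ℝ)
    (ε θ : ℝ) (hε0 : 0 < ε) (hε1 : ε < 1) (hθ : 0 < θ)
    (k : ℕ) (hk : k = ⌊ε * (N : ℝ)⌋₊) (hkN : k < N)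
    (X : Set (Fin L → ℝ))
    (f : Fin N → Fin P → (Fin L → ℝ) → ℝ)
    (hf : ∀ i p x, f i p x =
      ((∑ j, b p j * ξ i j) + d p - ∑ j, a p j * x j) / dstar (b p))
    (q : Fin P → ℝ)
    (hq : ∀ p, q p =
      ((fun i => ∑ j, b p j * ξ i j) ∘ Tuple.sort (fun i => ∑ j, b p j * ξ i j)) ⟨k, hkN⟩)
    (XExact : Set (Fin L → ℝ))
    (hXExact : XExact = {x | x ∈ X ∧ ∃ s : ℝ, ∃ r : Fin N → ℝ,
      0 ≤ s ∧ (∀ i, 0 ≤ r i) ∧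
      ε * (N : ℝ) * s - ∑ i, r i ≥ θ * (N : ℝ) ∧
      ∀ i p, max (f i p x) 0 ≥ s - r i})
    (XSLA : (Fin N → ℝ) → Set (Fin L → ℝ))
    (hXSLA : ∀ κ : Fin N → ℝ, XSLA κ = {x | x ∈ X ∧ ∃ s : ℝ, ∃ r : Fin N → ℝ,
      0 ≤ s ∧ (∀ i, 0 ≤ r i) ∧
      ε * (N : ℝ) * s - ∑ i, r i ≥ θ * (N : ℝ) ∧
      (∀ i p, κ i * f i p x ≥ s - r i) ∧
      ∀ p, (q p + d p - ∑ j, a p j * x j) / dstar (b p) ≥ s})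
    :
    ((∀ i : Fin N, ∀ x ∈ XExact, ∀ p,
        0 ≤ (∑ j, b p j * ξ i j) + d p - ∑ j, a p j * x j) ∨
      ε ≤ 1 / (N : ℝ)) →
    XSLA (fun _ => 1) = XExact := by
  intro hcond
  have hD : ∀ p, 0 ≤ dstar (b p) := by
    intro p
    rw [hdstar]
    apply Real.sSup_nonneg'
    refine ⟨0, ⟨0, ?_, by simp⟩, le_rfl⟩
    have h0 := (nrm_eq_zero 0).2 rfl
    simp [h0]
  have hNR : (0 : ℝ) < N := by exact_mod_cast hN
  have hkR : ε * (N : ℝ) ≤ (k : ℝ) + 1 := by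
    rw [hk]; exact (Nat.lt_floor_add_one _).le
  ext x
  rw [hXSLA]
  constructor
  · rintro ⟨hx, s, r, hs, hr, hobj, hc, -⟩
    rw [hXExact]
    refine ⟨hx, s, r, hs, hr, hobj, fun i p => ?_⟩
    have h1 := hc i p
    have h2 := le_max_left (f i p x) 0
    simp only [one_mul] at h1
    linarith
  · intro hxE
    have hxE' := hxE
    rw [hXExact] at hxE'
    obtain ⟨hx, s, r, hs, hr, hobj, hc⟩ := hxE'
    have hfn : ∀ i p, 0 ≤ f i p x ∧ s - r i ≤ f i p x := by
      rcases hcond with h | h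
      · intro i p
        have h0 : 0 ≤ f i p x := by
          rw [hf]; exact div_nonneg (h i x hxE p) (hD p)
        have h1 := hc i p
        rw [max_eq_left h0] at h1
        exact ⟨h0, h1⟩
      · intro i p
        have h1 : ε * (N : ℝ) ≤ 1 := by
          rwa [le_div_iff₀ hNR] at h
        have h2 : r i ≤ ∑ i, r i :=
          Finset.single_le_sum (fun j _ => hr j) (Finset.mem_univ i)
        have h3 : ε * (N : ℝ) * s ≤ 1 * s := mul_le_mul_of_nonneg_right h1 hs
        have h4 : 0 < θ * (N : ℝ) := mul_pos hθ hNR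
        have h5 := hc i p
        have h6 : 0 < f i p x := by
          by_contra hneg
          rw [max_eq_right (not_lt.1 hneg)] at h5
          linarith
        rw [max_eq_left h6.le] at h5
        exact ⟨h6.le, h5⟩
    haveI : Nonempty (Fin P) := ⟨⟨0, hP⟩⟩
    obtain ⟨p0, hp0⟩ := Finite.exists_min
      (fun p => (q p + d p - ∑ j, a p j * x j) / dstar (b p))
    set m := (q p0 + d p0 - ∑ j, a p0 j * x j) / dstar (b p0) with hm
    by_cases hsm : s ≤ m
    · exact ⟨hx, s, r, hs, hr, hobj, fun i p => by simpa using (hfn i p).2,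
        fun p => hsm.trans (hp0 p)⟩
    · push Not at hsm
      have hm0 : 0 ≤ m := by
        have := (hfn (Tuple.sort (fun i => ∑ j, b p0 j * ξ i j) ⟨k, hkN⟩) p0).1
        rw [hf] at this
        rw [hm, hq]
        exact this
      have hT : ∀ j : Fin N, j ≤ ⟨k, hkN⟩ →
          s - m ≤ r (Tuple.sort (fun i => ∑ j, b p0 j * ξ i j) j) := by
        intro j hj
        have h1 := (hfn (Tuple.sort (fun i => ∑ j, b p0 j * ξ i j) j) p0).2
        have h2 := Tuple.monotone_sort (fun i => ∑ j, b p0 j * ξ i j) hj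
        have h3 : f (Tuple.sort (fun i => ∑ j, b p0 j * ξ i j) j) p0 x ≤ m := by
          rw [hf, hm, hq]
          apply div_le_div_of_nonneg_right _ (hD p0)
          simp only [Function.comp] at h2 ⊢
          linarith
        linarith
      have hsum : ((k : ℝ) + 1) * (s - m) ≤ ∑ i, min (s - m) (r i) := by
        rw [← Equiv.sum_comp (Tuple.sort (fun i => ∑ j, b p0 j * ξ i j))]
        calc ((k : ℝ) + 1) * (s - m)
            = ∑ j ∈ Finset.Iic (⟨k, hkN⟩ : Fin N), (s - m) := by
              simp [Fin.card_Iic]; ring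
          _ ≤ ∑ j ∈ Finset.Iic (⟨k, hkN⟩ : Fin N),
                min (s - m) (r (Tuple.sort (fun i => ∑ j, b p0 j * ξ i j) j)) := by
              apply Finset.sum_le_sum
              intro j hj
              exact le_min le_rfl (hT j (Finset.mem_Iic.1 hj))
          _ ≤ _ := by
              apply Finset.sum_le_sum_of_subset_of_nonneg (Finset.subset_univ _)
              intro j _ _
              exact le_min (by linarith) (hr _)
      refine ⟨hx, m, fun i => r i - min (s - m) (r i), hm0, ?_, ?_, ?_, hp0⟩
      · intro i
        have := min_le_right (s - m) (r i)
        linarith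
      · rw [Finset.sum_sub_distrib]
        have h1 : ε * (N : ℝ) * (s - m) ≤ ((k : ℝ) + 1) * (s - m) :=
          mul_le_mul_of_nonneg_right hkR (by linarith)
        linarith
      · intro i p
        obtain ⟨h1, h2⟩ := hfn i p
        simp only [one_mul]
        rcases min_cases (s - m) (r i) with ⟨h, h'⟩ | ⟨h, h'⟩
        · rw [h]; linarith
        · rw [h]
          linarith
end

section
/- For any fixed x ∈ X_Exact, there exist s ∈ ℝ and r ∈ ℝ^N such that s equals the (k+1)-th smallest value among {D_i(x)}_{i∈[N]} and (s, r) satisfies all the constraints of the exact reformulation, namely s ≥ 0, r_i ≥ 0 for all i, εNs − Σ_{i∈[N]} r_i ≥ θN, and (f_{i,p}(x))^+ ≥ s − r_i for all i ∈ [N], p ∈ [P]. -/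
theorem sorted_sum_bound (N k : ℕ) (hkN : k < N) (e s : ℝ) (hk1 : (k : ℝ) ≤ e)
    (hk2 : e ≤ (k : ℝ) + 1) (g R : Fin N → ℝ) (hg : Monotone g)
    (hR0 : ∀ j, 0 ≤ R j) (hR : ∀ j, s - g j ≤ R j) :
    ∑ j, max (g ⟨k, hkN⟩ - g j) 0 ≤ ∑ j, R j + e * (g ⟨k, hkN⟩ - s) := by
  set q : Fin N := ⟨k, hkN⟩ with hq
  rcases le_total s (g q) with h | h
  · have h1 : ∑ j, max (g q - g j) 0 ≤ ∑ j, (R j + if j < q then (g q - s) else 0) := by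
      apply Finset.sum_le_sum
      intro j _
      have a1 := hR0 j
      have a2 := hR j
      split_ifs with hj
      · apply max_le <;> linarith
      · have := hg (not_lt.mp hj)
        apply max_le <;> linarith
    have h2 : ∑ j : Fin N, (if j < q then (g q - s) else 0) = k * (g q - s) := by
      rw [← Finset.sum_filter, Finset.sum_const, nsmul_eq_mul]
      have : (Finset.univ.filter (fun j : Fin N => j < q)) = Finset.Iio q := by ext; simp
      rw [this, Fin.card_Iio]
    rw [Finset.sum_add_distrib, h2] at h1
    nlinarith
  · have h1 : ∑ j, max (g q - g j) 0 ≤ ∑ j, (R j + if j ≤ q then (g q - s) else 0) := by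
      apply Finset.sum_le_sum
      intro j _
      have a1 := hR0 j
      have a2 := hR j
      split_ifs with hj
      · have := hg hj
        apply max_le <;> linarith
      · have := hg (not_le.mp hj).le
        apply max_le <;> linarith
    have h2 : ∑ j : Fin N, (if j ≤ q then (g q - s) else 0) = ((k : ℝ) + 1) * (g q - s) := by
      rw [← Finset.sum_filter, Finset.sum_const, nsmul_eq_mul]
      have : (Finset.univ.filter (fun j : Fin N => j ≤ q)) = Finset.Iic q := by ext; simp
      rw [this, Fin.card_Iic]
      push_cast
      rfl
    rw [Finset.sum_add_distrib, h2] at h1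
    nlinarith

theorem stmt_7
    (N K L P : ℕ) (hN : 0 < N) (hK : 0 < K) (hL : 0 < L) (hP : 0 < P)
    (nrm : (Fin K → ℝ) → ℝ)
    (nrm_eq_zero : ∀ u : Fin K → ℝ, nrm u = 0 ↔ u = 0)
    (nrm_smul : ∀ (c : ℝ) (u : Fin K → ℝ), nrm (c • u) = |c| * nrm u)
    (nrm_triangle : ∀ u w : Fin K → ℝ, nrm (u + w) ≤ nrm u + nrm w)
    (dstar : (Fin K → ℝ) → ℝ)
    (hdstar : ∀ v : Fin K → ℝ,
      dstar v = sSup ((fun u : Fin K → ℝ => ∑ j, v j * u j) '' {u | nrm u ≤ 1}))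
    (ξ : Fin N → Fin K → ℝ)
    (a : Fin P → Fin L → ℝ) (b : Fin P → Fin K → ℝ) (hb : ∀ p, b p ≠ 0)
    (d : Fin P → ℝ)
    (ε θ : ℝ) (hε0 : 0 < ε) (hε1 : ε < 1) (hθ : 0 < θ)
    (k : ℕ) (hk : k = ⌊ε * (N : ℝ)⌋₊) (hkN : k < N)
    (X : Set (Fin L → ℝ))
    (f : Fin N → Fin P → (Fin L → ℝ) → ℝ)
    (hf : ∀ i p x, f i p x =
      ((∑ j, b p j * ξ i j) + d p - ∑ j, a p j * x j) / dstar (b p))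
    (XExact : Set (Fin L → ℝ))
    (hXExact : XExact = {x | x ∈ X ∧ ∃ s : ℝ, ∃ r : Fin N → ℝ,
      0 ≤ s ∧ (∀ i, 0 ≤ r i) ∧
      ε * (N : ℝ) * s - ∑ i, r i ≥ θ * (N : ℝ) ∧
      ∀ i p, max (f i p x) 0 ≥ s - r i})
    (D : Fin N → (Fin L → ℝ) → ℝ)
    (hD : ∀ i x, D i x = ⨅ p, max (f i p x) 0)
    :
    ∀ x ∈ XExact, ∃ s : ℝ, ∃ r : Fin N → ℝ,
      s = ((fun i => D i x) ∘ Tuple.sort (fun i => D i x)) ⟨k, hkN⟩ ∧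
      0 ≤ s ∧ (∀ i, 0 ≤ r i) ∧
      ε * (N : ℝ) * s - ∑ i, r i ≥ θ * (N : ℝ) ∧
      ∀ i p, max (f i p x) 0 ≥ s - r i := by
  intro x hx
  rw [hXExact] at hx
  obtain ⟨-, s, r, hs, hr, hsum, hc⟩ := hx
  haveI : Nonempty (Fin P) := ⟨⟨0, hP⟩⟩
  have hD0 : ∀ i, 0 ≤ D i x := fun i => by
    rw [hD]
    exact Real.iInf_nonneg fun p => le_max_right _ _
  have hDle : ∀ i p, D i x ≤ max (f i p x) 0 := fun i p => by
    rw [hD]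
    exact ciInf_le (Set.finite_range _).bddBelow p
  have hDge : ∀ i, s - r i ≤ D i x := fun i => by
    rw [hD]
    exact le_ciInf fun p => hc i p
  have hN0 : 0 ≤ ε * (N : ℝ) := by positivity
  have hk1 : (k : ℝ) ≤ ε * N := by
    rw [hk]
    exact Nat.floor_le hN0
  have hk2 : ε * N ≤ (k : ℝ) + 1 := by
    rw [hk]
    exact (Nat.lt_floor_add_one _).le
  set σ := Tuple.sort (fun i => D i x) with hσ
  have key := sorted_sum_bound N k hkN (ε * N) s hk1 hk2 ((fun i => D i x) ∘ σ) (r ∘ σ)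
    (Tuple.monotone_sort _) (fun j => hr _)
    (fun j => by have := hDge (σ j); simp only [Function.comp]; linarith)
  set t := ((fun i => D i x) ∘ σ) ⟨k, hkN⟩ with ht
  have e1 : ∑ j, max (t - ((fun i => D i x) ∘ σ) j) 0 = ∑ i, max (t - D i x) 0 :=
    Equiv.sum_comp σ (fun i => max (t - D i x) 0)
  have e2 : ∑ j, (r ∘ σ) j = ∑ i, r i := Equiv.sum_comp σ r
  rw [e1, e2] at key
  refine ⟨t, fun i => max (t - D i x) 0, rfl, hD0 _, fun i => le_max_right _ _, ?_, ?_⟩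
  · linarith
  · intro i p
    have := hDle i p
    have := le_max_left (t - D i x) 0
    simp only
    linarith
end

section
/- Fix κ ∈ [0,1]^N and define the approximated distance D̂_i(x) := κ_i · min_{p∈[P]} (f_{i,p}(x))^+. For any x ∈ X_LA(κ), there exist s ∈ ℝ and r ∈ ℝ^N such that s equals the (k+1)-th smallest value among {D̂_i(x)}_{i∈[N]} and (s, r) satisfies all the constraints defining X_LA(κ), namely s ≥ 0, r_i ≥ 0 for all i, εNs − Σ_{i∈[N]} r_i ≥ θN, and κ_i f_{i,p}(x) ≥ s − r_i for all i ∈ [N], p ∈ [P]. -/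
theorem stmt_8
    (N K L P : ℕ) (hN : 0 < N) (hK : 0 < K) (hL : 0 < L) (hP : 0 < P)
    (nrm : (Fin K → ℝ) → ℝ)
    (nrm_eq_zero : ∀ u : Fin K → ℝ, nrm u = 0 ↔ u = 0)
    (nrm_smul : ∀ (c : ℝ) (u : Fin K → ℝ), nrm (c • u) = |c| * nrm u)
    (nrm_triangle : ∀ u w : Fin K → ℝ, nrm (u + w) ≤ nrm u + nrm w)
    (dstar : (Fin K → ℝ) → ℝ)
    (hdstar : ∀ v : Fin K → ℝ,
      dstar v = sSup ((fun u : Fin K → ℝ => ∑ j, v j * u j) '' {u | nrm u ≤ 1}))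
    (ξ : Fin N → Fin K → ℝ)
    (a : Fin P → Fin L → ℝ) (b : Fin P → Fin K → ℝ) (hb : ∀ p, b p ≠ 0)
    (d : Fin P → ℝ)
    (ε θ : ℝ) (hε0 : 0 < ε) (hε1 : ε < 1) (hθ : 0 < θ)
    (k : ℕ) (hk : k = ⌊ε * (N : ℝ)⌋₊) (hkN : k < N)
    (X : Set (Fin L → ℝ))
    (f : Fin N → Fin P → (Fin L → ℝ) → ℝ)
    (hf : ∀ i p x, f i p x =
      ((∑ j, b p j * ξ i j) + d p - ∑ j, a p j * x j) / dstar (b p))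
    (XLA : (Fin N → ℝ) → Set (Fin L → ℝ))
    (hXLA : ∀ κ : Fin N → ℝ, XLA κ = {x | x ∈ X ∧ ∃ s : ℝ, ∃ r : Fin N → ℝ,
      0 ≤ s ∧ (∀ i, 0 ≤ r i) ∧
      ε * (N : ℝ) * s - ∑ i, r i ≥ θ * (N : ℝ) ∧
      ∀ i p, κ i * f i p x ≥ s - r i})
    (κ : Fin N → ℝ) (hκ : ∀ i, 0 ≤ κ i ∧ κ i ≤ 1)
    (Dhat : Fin N → (Fin L → ℝ) → ℝ)
    (hDhat : ∀ i x, Dhat i x = κ i * ⨅ p, max (f i p x) 0)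
    :
    ∀ x ∈ XLA κ, ∃ s : ℝ, ∃ r : Fin N → ℝ,
      s = ((fun i => Dhat i x) ∘ Tuple.sort (fun i => Dhat i x)) ⟨k, hkN⟩ ∧
      0 ≤ s ∧ (∀ i, 0 ≤ r i) ∧
      ε * (N : ℝ) * s - ∑ i, r i ≥ θ * (N : ℝ) ∧
      ∀ i p, κ i * f i p x ≥ s - r i := by
  intro x hx
  rw [hXLA] at hx
  obtain ⟨-, s0, r0, hs0, hr0, hsum, hc⟩ := hx
  haveI : Nonempty (Fin P) := ⟨⟨0, hP⟩⟩
  have hmin : ∀ i, ∃ q, ∀ p, f i q x ≤ f i p x := fun i =>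
    Finite.exists_min (fun p => f i p x)
  choose q hq using hmin
  obtain ⟨m, hm⟩ : ∃ m : Fin N → ℝ, ∀ i, m i = κ i * f i (q i) x := ⟨_, fun _ => rfl⟩
  obtain ⟨D, hD⟩ : ∃ D : Fin N → ℝ, D = fun i => Dhat i x := ⟨_, rfl⟩
  have hDm : ∀ i, D i = max (m i) 0 := by
    intro i
    have h1 : (⨅ p, max (f i p x) 0) = max (f i (q i) x) 0 := by
      apply le_antisymm
      · exact ciInf_le (Set.finite_range (fun p => max (f i p x) 0)).bddBelow (q i)
      · exact le_ciInf fun p => max_le_max (hq i p) le_rfl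
    rw [hD, hm]
    simp only [hDhat, h1]
    rw [mul_max_of_nonneg _ _ (hκ i).1, mul_zero]
  rw [← hD]
  set σ := Tuple.sort D with hσ
  have hmono : Monotone (D ∘ σ) := Tuple.monotone_sort D
  obtain ⟨t, ht⟩ : ∃ t, t = (D ∘ σ) ⟨k, hkN⟩ := ⟨_, rfl⟩
  have hlo : ∀ j : Fin N, j.val ≤ k → D (σ j) ≤ t := fun j hj => by
    rw [ht]; exact hmono (show j ≤ ⟨k, hkN⟩ from hj)
  have hhi : ∀ j : Fin N, k ≤ j.val → t ≤ D (σ j) := fun j hj => by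
    rw [ht]; exact hmono (show (⟨k, hkN⟩ : Fin N) ≤ j from hj)
  have ht0 : 0 ≤ t := by
    rw [ht]; simp only [Function.comp, hDm]; exact le_max_right _ _
  have hεN : 0 ≤ ε * (N : ℝ) := by positivity
  have hk1 : (k : ℝ) ≤ ε * N := by rw [hk]; exact Nat.floor_le hεN
  have hk2 : ε * (N : ℝ) < k + 1 := by rw [hk]; exact Nat.lt_floor_add_one _
  have hcount : ∀ (n : ℕ) (c : ℝ), n ≤ N →
      ∑ j : Fin N, (if j.val < n then c else 0) = n * c := by
    intro n c hn
    rw [Fin.sum_univ_eq_sum_range (fun j => if j < n then c else 0) N, ← Finset.sum_filter]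
    have : (Finset.range N).filter (fun j => j < n) = Finset.range n := by
      ext j; simp; omega
    rw [this]; simp
  have hr0m : ∀ i, s0 - m i ≤ r0 i := fun i => by
    have := hc i (q i); rw [← hm] at this; linarith
  refine ⟨t, fun i => max (t - m i) 0, ht, ht0, fun i => le_max_right _ _, ?_, ?_⟩
  · have e1 : ∑ i, r0 i = ∑ j, r0 (σ j) := (Equiv.sum_comp σ r0).symm
    have e2 : ∑ i, max (t - m i) 0 = ∑ j, max (t - m (σ j)) 0 :=
      (Equiv.sum_comp σ (fun i => max (t - m i) 0)).symm
    rw [e2]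
    rw [e1] at hsum
    rcases le_total t s0 with h | h
    · have hle : ∑ j : Fin N, (if j.val < k + 1 then s0 - t else 0)
          ≤ ∑ j, (r0 (σ j) - max (t - m (σ j)) 0) := by
        apply Finset.sum_le_sum
        intro j _
        have a1 := hr0m (σ j)
        have a2 := hr0 (σ j)
        split_ifs with hj
        · have a3 := hlo j (by omega)
          rw [hDm] at a3
          have a4 := (max_le_iff.1 a3).1
          rw [max_eq_left (by linarith)]
          linarith
        · have : max (t - m (σ j)) 0 ≤ r0 (σ j) := max_le (by linarith) a2
          linarith
      rw [hcount (k + 1) _ hkN, Finset.sum_sub_distrib] at hle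
      push_cast at hle
      nlinarith
    · rcases h.eq_or_lt with h | h
      · have hle : ∑ j, max (t - m (σ j)) 0 ≤ ∑ j, r0 (σ j) :=
          Finset.sum_le_sum fun j _ => max_le (by rw [← h]; exact hr0m _) (hr0 _)
        rw [← h] at hle ⊢
        linarith
      have hle : ∑ j, (max (t - m (σ j)) 0 - r0 (σ j))
          ≤ ∑ j : Fin N, (if j.val < k then t - s0 else 0) := by
        apply Finset.sum_le_sum
        intro j _
        have a1 := hr0m (σ j)
        have a2 := hr0 (σ j)
        split_ifs with hj
        · have : max (t - m (σ j)) 0 ≤ r0 (σ j) + (t - s0) :=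
            max_le (by linarith) (by linarith)
          linarith
        · have a3 := hhi j (by omega)
          rw [hDm] at a3
          have a4 : t ≤ m (σ j) := by
            rcases le_max_iff.1 a3 with h' | h'
            · exact h'
            · linarith
          rw [max_eq_right (by linarith)]
          linarith
      rw [hcount k _ hkN.le, Finset.sum_sub_distrib] at hle
      nlinarith
  · intro i p
    have h1 : m i ≤ κ i * f i p x := by
      rw [hm]; exact mul_le_mul_of_nonneg_left (hq i p) (hκ i).1
    have h2 := le_max_left (t - m i) 0
    show κ i * f i p x ≥ t - max (t - m i) 0
    linarith
end

section
/- The distance from a point to the unsafe set admits the analytical expression: for every x ∈ ℝ^L and every ξ ∈ ℝ^K, inf{‖ξ − ξ'‖ : ξ' ∈ ℝ^K, ξ' ∉ S(x)} = min_{p∈[P]} ((b_p^⊤ξ + d_p − a_p^⊤x)/‖b_p‖_*)^+ = (min_{p∈[P]} (b_p^⊤ξ + d_p − a_p^⊤x)/‖b_p‖_*)^+. -/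
theorem aux_bound {E : Type*} [AddCommGroup E] [Module ℝ E] [FiniteDimensional ℝ E]
    (nrm : E → ℝ) (h0 : ∀ u, nrm u = 0 ↔ u = 0)
    (hs : ∀ (c : ℝ) u, nrm (c • u) = |c| * nrm u)
    (ht : ∀ u w, nrm (u + w) ≤ nrm u + nrm w) (hn : ∀ u, 0 ≤ nrm u) (f : E →ₗ[ℝ] ℝ) :
    ∃ C : ℝ, ∀ u, f u ≤ C * nrm u := by
  let _ : Norm E := ⟨nrm⟩
  have core : NormedSpace.Core ℝ E :=
    { norm_nonneg := hn
      norm_smul := hs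
      norm_triangle := ht
      norm_eq_zero_iff := h0 }
  let _ : NormedAddCommGroup E := NormedAddCommGroup.ofCore core
  let _ : NormedSpace ℝ E := NormedSpace.ofCore core
  refine ⟨‖LinearMap.toContinuousLinearMap f‖, fun u => ?_⟩
  exact (le_abs_self _).trans ((LinearMap.toContinuousLinearMap f).le_opNorm u)


theorem stmt_9
    (K L P : ℕ) (hK : 0 < K) (hL : 0 < L) (hP : 0 < P)
    (nrm : (Fin K → ℝ) → ℝ)
    (nrm_eq_zero : ∀ u : Fin K → ℝ, nrm u = 0 ↔ u = 0)
    (nrm_smul : ∀ (c : ℝ) (u : Fin K → ℝ), nrm (c • u) = |c| * nrm u)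
    (nrm_triangle : ∀ u w : Fin K → ℝ, nrm (u + w) ≤ nrm u + nrm w)
    (dstar : (Fin K → ℝ) → ℝ)
    (hdstar : ∀ v : Fin K → ℝ,
      dstar v = sSup ((fun u : Fin K → ℝ => ∑ j, v j * u j) '' {u | nrm u ≤ 1}))
    (a : Fin P → Fin L → ℝ) (b : Fin P → Fin K → ℝ) (hb : ∀ p, b p ≠ 0)
    (d : Fin P → ℝ)
    (S : (Fin L → ℝ) → Set (Fin K → ℝ))
    (hS : ∀ x, S x = {u | ∀ p, 0 ≤ (∑ j, b p j * u j) + d p - ∑ j, a p j * x j})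
    :
    ∀ (x : Fin L → ℝ) (ξ : Fin K → ℝ),
      sInf ((fun u => nrm (ξ - u)) '' {u | u ∉ S x}) =
        (⨅ p, max (((∑ j, b p j * ξ j) + d p - ∑ j, a p j * x j) / dstar (b p)) 0) ∧
      (⨅ p, max (((∑ j, b p j * ξ j) + d p - ∑ j, a p j * x j) / dstar (b p)) 0) =
        max (⨅ p, ((∑ j, b p j * ξ j) + d p - ∑ j, a p j * x j) / dstar (b p)) 0 := by
  have h00 : nrm 0 = 0 := (nrm_eq_zero 0).2 rfl
  have hn : ∀ u, 0 ≤ nrm u := by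
    intro u
    have h1 := nrm_triangle u ((-1 : ℝ) • u)
    rw [nrm_smul] at h1
    simp [h00] at h1
    linarith
  have hbdd : ∀ v : Fin K → ℝ,
      BddAbove ((fun u : Fin K → ℝ => ∑ j, v j * u j) '' {u | nrm u ≤ 1}) := by
    intro v
    obtain ⟨C, hC⟩ := aux_bound nrm nrm_eq_zero nrm_smul nrm_triangle hn
      (∑ j, v j • (LinearMap.proj j : (Fin K → ℝ) →ₗ[ℝ] ℝ))
    refine ⟨|C|, ?_⟩
    rintro _ ⟨u, hu, rfl⟩
    have h1 := hC u
    simp only [LinearMap.sum_apply, LinearMap.smul_apply, LinearMap.proj_apply,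
      smul_eq_mul] at h1
    have hu' : nrm u ≤ 1 := hu
    have h2 : C * nrm u ≤ |C| * 1 :=
      mul_le_mul (le_abs_self C) hu' (hn u) (abs_nonneg C)
    show ∑ j, v j * u j ≤ |C|
    linarith
  have hle : ∀ v u : Fin K → ℝ, ∑ j, v j * u j ≤ dstar v * nrm u := by
    intro v u
    by_cases hu : u = 0
    · subst hu; simp [h00]
    have hpos : 0 < nrm u := lt_of_le_of_ne (hn u) (fun h => hu ((nrm_eq_zero u).1 h.symm))
    have h1 : ∑ j, v j * ((nrm u)⁻¹ • u) j ≤ dstar v := by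
      rw [hdstar]
      refine le_csSup (hbdd v) ⟨(nrm u)⁻¹ • u, ?_, rfl⟩
      show nrm ((nrm u)⁻¹ • u) ≤ 1
      rw [nrm_smul, abs_of_pos (inv_pos.2 hpos), inv_mul_cancel₀ hpos.ne']
    have h2 : ∑ j, v j * ((nrm u)⁻¹ • u) j = (∑ j, v j * u j) / nrm u := by
      rw [Finset.sum_div]
      refine Finset.sum_congr rfl fun j _ => ?_
      simp only [Pi.smul_apply, smul_eq_mul]
      field_simp
    rw [h2, div_le_iff₀ hpos] at h1
    exact h1
  have hDpos : ∀ p, 0 < dstar (b p) := by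
    intro p
    have h1 := hle (b p) (b p)
    have h2 : 0 < ∑ j, b p j * b p j := by
      obtain ⟨j, hj⟩ := Function.ne_iff.1 (hb p)
      exact Finset.sum_pos' (fun i _ => mul_self_nonneg _)
        ⟨j, Finset.mem_univ _, mul_self_pos.2 hj⟩
    by_contra hneg
    have := mul_nonpos_of_nonpos_of_nonneg (not_lt.1 hneg) (hn (b p))
    linarith
  have hex : ∀ p (e : ℝ), e < dstar (b p) → ∃ w, nrm w ≤ 1 ∧ e < ∑ j, b p j * w j := by
    intro p e he
    rw [hdstar] at he
    obtain ⟨_, ⟨w, hw, rfl⟩, h⟩ := exists_lt_of_lt_csSup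
      (Set.Nonempty.image _ ⟨0, by show nrm 0 ≤ 1; rw [h00]; exact zero_le_one⟩) he
    exact ⟨w, hw, h⟩
  intro x ξ
  have : Nonempty (Fin P) := ⟨⟨0, hP⟩⟩
  have hbi : ∀ f : Fin P → ℝ, BddBelow (Set.range f) := fun f => (Set.finite_range f).bddBelow
  have happ : ∀ p (ε : ℝ), 0 < ε → ∃ u, u ∉ S x ∧ nrm (ξ - u) ≤
      max (((∑ j, b p j * ξ j) + d p - ∑ j, a p j * x j) / dstar (b p)) 0 + ε := by
    intro p ε hε
    set g := (∑ j, b p j * ξ j) + d p - ∑ j, a p j * x j with hg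
    set t := max (g / dstar (b p)) 0 + ε with htdef
    have ht : 0 < t := by have := le_max_right (g / dstar (b p)) 0; linarith
    have ht2 : g / dstar (b p) < t := by
      have := le_max_left (g / dstar (b p)) 0; linarith
    rw [div_lt_iff₀ (hDpos p)] at ht2
    obtain ⟨w, hw, hlt⟩ := hex p (g / t) (by rw [div_lt_iff₀ ht]; linarith)
    rw [div_lt_iff₀ ht] at hlt
    refine ⟨ξ - t • w, ?_, ?_⟩
    · rw [hS]
      intro h
      have h1 := h p
      have h2 : ∑ j, b p j * (ξ - t • w) j
          = ∑ j, b p j * ξ j - (∑ j, b p j * w j) * t := by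
        rw [Finset.sum_mul, ← Finset.sum_sub_distrib]
        refine Finset.sum_congr rfl fun j _ => ?_
        simp only [Pi.sub_apply, Pi.smul_apply, smul_eq_mul]
        ring
      rw [h2] at h1
      linarith
    · rw [sub_sub_cancel, nrm_smul, abs_of_pos ht]
      exact mul_le_of_le_one_right ht.le hw
  constructor
  · apply le_antisymm
    · refine le_ciInf fun p => le_of_forall_pos_le_add fun ε hε => ?_
      obtain ⟨u, hu, hu2⟩ := happ p ε hε
      refine (csInf_le ?_ (Set.mem_image_of_mem _ hu)).trans hu2
      refine ⟨0, ?_⟩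
      rintro _ ⟨u, _, rfl⟩
      exact hn _
    · obtain ⟨u0, hu0, _⟩ := happ ⟨0, hP⟩ 1 one_pos
      refine le_csInf (Set.Nonempty.image _ ⟨u0, hu0⟩) ?_
      rintro _ ⟨u, hu, rfl⟩
      have hu' : u ∉ S x := hu
      rw [hS] at hu'
      simp only [Set.mem_ofPred_eq, not_forall, not_le] at hu'
      obtain ⟨p, hp⟩ := hu'
      refine (ciInf_le (hbi _) p).trans (max_le ?_ (hn _))
      rw [div_le_iff₀ (hDpos p)]
      have h1 := hle (b p) (ξ - u)
      have h2 : ∑ j, b p j * (ξ - u) j = ∑ j, b p j * ξ j - ∑ j, b p j * u j := by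
        rw [← Finset.sum_sub_distrib]
        refine Finset.sum_congr rfl fun j _ => ?_
        simp only [Pi.sub_apply]
        ring
      rw [h2] at h1
      show _ ≤ nrm (ξ - u) * dstar (b p)
      linarith
  · apply le_antisymm
    · obtain ⟨p, hp⟩ := Finite.exists_min
        (fun p => ((∑ j, b p j * ξ j) + d p - ∑ j, a p j * x j) / dstar (b p))
      refine (ciInf_le (hbi _) p).trans (max_le_max (le_ciInf hp) le_rfl)
    · exact le_ciInf fun p => max_le_max (ciInf_le (hbi _) p) le_rfl
end

section
/- The exact reformulation can be expressed as a mixed-integer program with a suitably large but finite big-M constant: assuming X is bounded, there exists M₀ > 0 such that for every M ≥ M₀, X_Exact = {x ∈ X : ∃ z ∈ {0,1}^N, s ≥ 0, r ∈ ℝ^N with r ≥ 0, εNs − Σ_{i∈[N]} r_i ≥ θN, f_{i,p}(x) + M z_i ≥ s − r_i for all i ∈ [N], p ∈ [P], and M(1 − z_i) ≥ s − r_i for all i ∈ [N]}. -/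
theorem stmt_11
    (N K L P : ℕ) (hN : 0 < N) (hK : 0 < K) (hL : 0 < L) (hP : 0 < P)
    (nrm : (Fin K → ℝ) → ℝ)
    (nrm_eq_zero : ∀ u : Fin K → ℝ, nrm u = 0 ↔ u = 0)
    (nrm_smul : ∀ (c : ℝ) (u : Fin K → ℝ), nrm (c • u) = |c| * nrm u)
    (nrm_triangle : ∀ u w : Fin K → ℝ, nrm (u + w) ≤ nrm u + nrm w)
    (dstar : (Fin K → ℝ) → ℝ)
    (hdstar : ∀ v : Fin K → ℝ,
      dstar v = sSup ((fun u : Fin K → ℝ => ∑ j, v j * u j) '' {u | nrm u ≤ 1}))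
    (ξ : Fin N → Fin K → ℝ)
    (a : Fin P → Fin L → ℝ) (b : Fin P → Fin K → ℝ) (hb : ∀ p, b p ≠ 0)
    (d : Fin P → ℝ)
    (ε θ : ℝ) (hε0 : 0 < ε) (hε1 : ε < 1) (hθ : 0 < θ)
    (k : ℕ) (hk : k = ⌊ε * (N : ℝ)⌋₊) (hkN : k < N)
    (X : Set (Fin L → ℝ))
    (f : Fin N → Fin P → (Fin L → ℝ) → ℝ)
    (hf : ∀ i p x, f i p x =
      ((∑ j, b p j * ξ i j) + d p - ∑ j, a p j * x j) / dstar (b p))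
    (XExact : Set (Fin L → ℝ))
    (hXExact : XExact = {x | x ∈ X ∧ ∃ s : ℝ, ∃ r : Fin N → ℝ,
      0 ≤ s ∧ (∀ i, 0 ≤ r i) ∧
      ε * (N : ℝ) * s - ∑ i, r i ≥ θ * (N : ℝ) ∧
      ∀ i p, max (f i p x) 0 ≥ s - r i})
    (hXbdd : Bornology.IsBounded X)
    :
    ∃ M₀ : ℝ, 0 < M₀ ∧ ∀ M : ℝ, M₀ ≤ M →
      XExact = {x | x ∈ X ∧ ∃ z : Fin N → ℝ, ∃ s : ℝ, ∃ r : Fin N → ℝ,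
        (∀ i, z i = 0 ∨ z i = 1) ∧ 0 ≤ s ∧ (∀ i, 0 ≤ r i) ∧
        ε * (N : ℝ) * s - ∑ i, r i ≥ θ * (N : ℝ) ∧
        (∀ i p, f i p x + M * z i ≥ s - r i) ∧
        ∀ i, M * (1 - z i) ≥ s - r i} := by
  have hcont : Continuous (fun x : Fin L → ℝ => fun i p => f i p x) := by
    refine continuous_pi fun i => continuous_pi fun p => ?_
    have : (fun x => f i p x) = fun x =>
        ((∑ j, b p j * ξ i j) + d p - ∑ j, a p j * x j) / dstar (b p) := by
      funext x
      exact hf i p x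
    rw [this]
    refine Continuous.div_const ?_ _
    fun_prop
  obtain ⟨B, hB⟩ := hXbdd.isCompact_closure.exists_bound_of_continuousOn hcont.continuousOn
  have hfB : ∀ x ∈ X, ∀ i p, |f i p x| ≤ B := by
    intro x hx i p
    have h1 := hB x (subset_closure hx)
    have h2 := norm_le_pi_norm (fun i p => f i p x) i
    have h3 := norm_le_pi_norm (fun p => f i p x) p
    simp only [Real.norm_eq_abs] at h3
    linarith
  refine ⟨max B 1, lt_of_lt_of_le one_pos (le_max_right _ _), ?_⟩
  intro M hM
  have hMB : B ≤ M := le_trans (le_max_left _ _) hM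
  have hM1 : 1 ≤ M := le_trans (le_max_right _ _) hM
  subst hXExact
  ext x
  constructor
  · rintro ⟨hx, s, r, hs, hr, hsum, hc⟩
    classical
    refine ⟨hx, fun i => if ∃ p, f i p x < 0 then 1 else 0, s, r, ?_, hs, hr, hsum, ?_, ?_⟩
    · intro i
      by_cases h : ∃ p, f i p x < 0
      · right
        simp [h]
      · left
        simp only [if_neg h]
    · intro i p
      have hb1 := abs_le.mp (hfB x hx i p)
      by_cases h : ∃ p, f i p x < 0
      · simp only [if_pos h]
        obtain ⟨q, hq⟩ := h
        have := hc i q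
        rw [max_eq_right hq.le] at this
        linarith
      · simp only [if_neg h]
        push Not at h
        have := hc i p
        rw [max_eq_left (h p)] at this
        linarith
    · intro i
      by_cases h : ∃ p, f i p x < 0
      · simp only [if_pos h]
        obtain ⟨q, hq⟩ := h
        have := hc i q
        rw [max_eq_right hq.le] at this
        linarith
      · simp only [if_neg h]
        push Not at h
        have := hc i ⟨0, hP⟩
        rw [max_eq_left (h _)] at this
        have hb1 := abs_le.mp (hfB x hx i ⟨0, hP⟩)
        linarith
  · rintro ⟨hx, z, s, r, hz, hs, hr, hsum, h1, h2⟩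
    refine ⟨hx, s, r, hs, hr, hsum, ?_⟩
    intro i p
    have h1 := h1 i p
    have h2 := h2 i
    rcases hz i with h | h
    · rw [h] at h1
      have := le_max_left (f i p x) 0
      linarith
    · rw [h] at h2
      have := le_max_right (f i p x) 0
      linarith
end

section
/- For every x ∈ X_Exact, the (k+1)-th smallest value among {D_i(x)}_{i∈[N]} is at least θ/ε; in particular, for at least N − k indices i ∈ [N] the sample ξ_i satisfies b_p^⊤ξ_i + d_p − a_p^⊤x > 0 for all p ∈ [P]. -/
theorem stmt_12
    (N K L P : ℕ) (hN : 0 < N) (hK : 0 < K) (hL : 0 < L) (hP : 0 < P)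
    (nrm : (Fin K → ℝ) → ℝ)
    (nrm_eq_zero : ∀ u : Fin K → ℝ, nrm u = 0 ↔ u = 0)
    (nrm_smul : ∀ (c : ℝ) (u : Fin K → ℝ), nrm (c • u) = |c| * nrm u)
    (nrm_triangle : ∀ u w : Fin K → ℝ, nrm (u + w) ≤ nrm u + nrm w)
    (dstar : (Fin K → ℝ) → ℝ)
    (hdstar : ∀ v : Fin K → ℝ,
      dstar v = sSup ((fun u : Fin K → ℝ => ∑ j, v j * u j) '' {u | nrm u ≤ 1}))
    (ξ : Fin N → Fin K → ℝ)
    (a : Fin P → Fin L → ℝ) (b : Fin P → Fin K → ℝ) (hb : ∀ p, b p ≠ 0)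
    (d : Fin P → ℝ)
    (ε θ : ℝ) (hε0 : 0 < ε) (hε1 : ε < 1) (hθ : 0 < θ)
    (k : ℕ) (hk : k = ⌊ε * (N : ℝ)⌋₊) (hkN : k < N)
    (X : Set (Fin L → ℝ))
    (f : Fin N → Fin P → (Fin L → ℝ) → ℝ)
    (hf : ∀ i p x, f i p x =
      ((∑ j, b p j * ξ i j) + d p - ∑ j, a p j * x j) / dstar (b p))
    (XExact : Set (Fin L → ℝ))
    (hXExact : XExact = {x | x ∈ X ∧ ∃ s : ℝ, ∃ r : Fin N → ℝ,
      0 ≤ s ∧ (∀ i, 0 ≤ r i) ∧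
      ε * (N : ℝ) * s - ∑ i, r i ≥ θ * (N : ℝ) ∧
      ∀ i p, max (f i p x) 0 ≥ s - r i})
    (D : Fin N → (Fin L → ℝ) → ℝ)
    (hD : ∀ i x, D i x = ⨅ p, max (f i p x) 0)
    :
    ∀ x ∈ XExact,
      θ / ε ≤ ((fun i => D i x) ∘ Tuple.sort (fun i => D i x)) ⟨k, hkN⟩ ∧
      N - k ≤ Set.ncard {i : Fin N |
        ∀ p, 0 < (∑ j, b p j * ξ i j) + d p - ∑ j, a p j * x j} := by
  intro x hx
  rw [hXExact] at hx
  obtain ⟨-, s, r, hs, hr, hsum, hfr⟩ := hx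
  haveI : Nonempty (Fin P) := ⟨⟨0, hP⟩⟩
  have hNr : (0 : ℝ) < N := by exact_mod_cast hN
  have hDr : ∀ i, s - r i ≤ D i x := fun i => by
    rw [hD]; exact le_ciInf (fun p => hfr i p)
  have hDf : ∀ i p, D i x ≤ max (f i p x) 0 := fun i p => by
    rw [hD]; exact ciInf_le (Set.finite_range _).bddBelow p
  have hdn : ∀ v, 0 ≤ dstar v := fun v => by
    rw [hdstar]
    by_cases hB : BddAbove ((fun u : Fin K → ℝ => ∑ j, v j * u j) '' {u | nrm u ≤ 1})
    · refine le_csSup hB ⟨0, ?_, by simp⟩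
      have h0 : nrm 0 = 0 := (nrm_eq_zero 0).2 rfl
      simp [h0]
    · rw [Real.sSup_of_not_bddAbove hB]
  have hk1 : ε * (N : ℝ) < (k : ℝ) + 1 := by
    rw [hk]; exact Nat.lt_floor_add_one _
  have hmono : Monotone ((fun i => D i x) ∘ Tuple.sort (fun i => D i x)) :=
    Tuple.monotone_sort _
  set σ := Tuple.sort (fun i => D i x) with hσ
  have hv : θ / ε ≤ ((fun i => D i x) ∘ σ) ⟨k, hkN⟩ := by
    set v := ((fun i => D i x) ∘ σ) ⟨k, hkN⟩ with hvdef
    rw [div_le_iff₀ hε0]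
    have hgoal : θ * N ≤ (v * ε) * N := by
      rcases le_total v s with h | h
      · have h1 : ((k : ℝ) + 1) * (s - v) ≤ ∑ i, r i := by
          rw [← Equiv.sum_comp σ r]
          calc ((k : ℝ) + 1) * (s - v)
              = ∑ j ∈ Finset.Iic (⟨k, hkN⟩ : Fin N), (s - v) := by
                simp [Fin.card_Iic]
                ring
            _ ≤ ∑ j ∈ Finset.Iic (⟨k, hkN⟩ : Fin N), r (σ j) := by
                refine Finset.sum_le_sum fun j hj => ?_
                have h2 := hmono (Finset.mem_Iic.1 hj)
                have h3 := hDr (σ j)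
                simp only [Function.comp] at h2 hvdef
                linarith
            _ ≤ ∑ j, r (σ j) :=
                Finset.sum_le_sum_of_subset_of_nonneg (Finset.subset_univ _)
                  (fun j _ _ => hr _)
        have h4 := mul_le_mul_of_nonneg_right hk1.le (sub_nonneg.2 h)
        nlinarith
      · have h1 : 0 ≤ ∑ i, r i := Finset.sum_nonneg fun i _ => hr i
        have h4 := mul_le_mul_of_nonneg_left h (mul_pos hε0 hNr).le
        nlinarith
    exact le_of_mul_le_mul_right hgoal hNr
  refine ⟨hv, ?_⟩
  have hcard : ((Finset.Ici (⟨k, hkN⟩ : Fin N)).map σ.toEmbedding).card = N - k := by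
    simp [Fin.card_Ici]
  rw [← hcard, ← Set.ncard_coe_finset]
  refine Set.ncard_le_ncard ?_ (Set.toFinite _)
  intro i hi p
  simp only [Finset.coe_map, Set.mem_image, Finset.mem_coe, Finset.mem_Ici] at hi
  obtain ⟨j, hj, rfl⟩ := hi
  have h1 := hmono hj
  have h2 : 0 < max (f (σ j) p x) 0 :=
    lt_of_lt_of_le (div_pos hθ hε0) (hv.trans (h1.trans (hDf (σ j) p)))
  have h3 : 0 < f (σ j) p x := by
    rcases lt_max_iff.1 h2 with h | h
    · exact h
    · exact absurd h (lt_irrefl _)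
  rw [hf] at h3
  rcases div_pos_iff.1 h3 with h | h
  · exact h.1
  · exact absurd h.2 (not_lt.2 (hdn _))
end

section
/- Fix κ ∈ [0,1]^N and define D̂_i(x) := κ_i · min_{p∈[P]} (f_{i,p}(x))^+. For every x ∈ X_LA(κ), the (k+1)-th smallest value among {D̂_i(x)}_{i∈[N]} is at least θ/ε; in particular, min_{p∈[P]} f_{i,p}(x) > 0 for at least N − k indices i ∈ [N]. -/
theorem stmt_13
    (N K L P : ℕ) (hN : 0 < N) (hK : 0 < K) (hL : 0 < L) (hP : 0 < P)
    (nrm : (Fin K → ℝ) → ℝ)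
    (nrm_eq_zero : ∀ u : Fin K → ℝ, nrm u = 0 ↔ u = 0)
    (nrm_smul : ∀ (c : ℝ) (u : Fin K → ℝ), nrm (c • u) = |c| * nrm u)
    (nrm_triangle : ∀ u w : Fin K → ℝ, nrm (u + w) ≤ nrm u + nrm w)
    (dstar : (Fin K → ℝ) → ℝ)
    (hdstar : ∀ v : Fin K → ℝ,
      dstar v = sSup ((fun u : Fin K → ℝ => ∑ j, v j * u j) '' {u | nrm u ≤ 1}))
    (ξ : Fin N → Fin K → ℝ)
    (a : Fin P → Fin L → ℝ) (b : Fin P → Fin K → ℝ) (hb : ∀ p, b p ≠ 0)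
    (d : Fin P → ℝ)
    (ε θ : ℝ) (hε0 : 0 < ε) (hε1 : ε < 1) (hθ : 0 < θ)
    (k : ℕ) (hk : k = ⌊ε * (N : ℝ)⌋₊) (hkN : k < N)
    (X : Set (Fin L → ℝ))
    (f : Fin N → Fin P → (Fin L → ℝ) → ℝ)
    (hf : ∀ i p x, f i p x =
      ((∑ j, b p j * ξ i j) + d p - ∑ j, a p j * x j) / dstar (b p))
    (XLA : (Fin N → ℝ) → Set (Fin L → ℝ))
    (hXLA : ∀ κ : Fin N → ℝ, XLA κ = {x | x ∈ X ∧ ∃ s : ℝ, ∃ r : Fin N → ℝ,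
      0 ≤ s ∧ (∀ i, 0 ≤ r i) ∧
      ε * (N : ℝ) * s - ∑ i, r i ≥ θ * (N : ℝ) ∧
      ∀ i p, κ i * f i p x ≥ s - r i})
    (κ : Fin N → ℝ) (hκ : ∀ i, 0 ≤ κ i ∧ κ i ≤ 1)
    (Dhat : Fin N → (Fin L → ℝ) → ℝ)
    (hDhat : ∀ i x, Dhat i x = κ i * ⨅ p, max (f i p x) 0)
    :
    ∀ x ∈ XLA κ,
      θ / ε ≤ ((fun i => Dhat i x) ∘ Tuple.sort (fun i => Dhat i x)) ⟨k, hkN⟩ ∧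
      N - k ≤ Set.ncard {i : Fin N | 0 < ⨅ p, f i p x} := by
  intro x hx
  rw [hXLA] at hx
  obtain ⟨_, s, r, hs, hr, hsum, hfr⟩ := hx
  haveI : Nonempty (Fin P) := ⟨⟨0, hP⟩⟩
  have hD : ∀ i, s - r i ≤ Dhat i x := by
    intro i
    obtain ⟨p, hp⟩ := exists_eq_ciInf_of_finite (f := fun p => max (f i p x) 0)
    rw [hDhat, ← hp]
    exact (hfr i p).trans (mul_le_mul_of_nonneg_left (le_max_left _ _) (hκ i).1)
  set σ := Tuple.sort (fun i => Dhat i x) with hσ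
  have hmono : Monotone ((fun i => Dhat i x) ∘ σ) := Tuple.monotone_sort _
  have hNR : (0 : ℝ) < N := by exact_mod_cast hN
  have hk1 : ε * (N : ℝ) < (k : ℝ) + 1 := by
    rw [hk]; exact Nat.lt_floor_add_one _
  have hmain : θ / ε ≤ ((fun i => Dhat i x) ∘ σ) ⟨k, hkN⟩ := by
    set v := ((fun i => Dhat i x) ∘ σ) ⟨k, hkN⟩ with hv
    have hr' : ((k : ℝ) + 1) * (s - v) ≤ ∑ i, r i := by
      have h1 : ∑ i, r i = ∑ j, r (σ j) := (Equiv.sum_comp σ r).symm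
      have h2 : ∑ j ∈ Finset.Iic (⟨k, hkN⟩ : Fin N), r (σ j) ≤ ∑ j, r (σ j) :=
        Finset.sum_le_sum_of_subset_of_nonneg (Finset.subset_univ _) (fun j _ _ => hr _)
      have h3 : (Finset.Iic (⟨k, hkN⟩ : Fin N)).card • (s - v)
          ≤ ∑ j ∈ Finset.Iic (⟨k, hkN⟩ : Fin N), r (σ j) := by
        apply Finset.card_nsmul_le_sum
        intro j hj
        have h4 := hmono (Finset.mem_Iic.1 hj)
        have h5 := hD (σ j)
        simp only [Function.comp] at h4 hv
        linarith
      rw [Fin.card_Iic, nsmul_eq_mul] at h3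
      push_cast at h3
      linarith
    rw [div_le_iff₀ hε0]
    refine le_of_mul_le_mul_right ?_ hNR
    rcases le_total v s with h | h
    · nlinarith [mul_le_mul_of_nonneg_right hk1.le (sub_nonneg.2 h)]
    · have h0 : 0 ≤ ∑ i, r i := Finset.sum_nonneg (fun i _ => hr i)
      nlinarith [mul_le_mul_of_nonneg_left h (mul_pos hε0 hNR).le]
  refine ⟨hmain, ?_⟩
  have hpos : ∀ j, (⟨k, hkN⟩ : Fin N) ≤ j → 0 < ⨅ p, f (σ j) p x := by
    intro j hj
    have h1 : 0 < Dhat (σ j) x := lt_of_lt_of_le (div_pos hθ hε0) (hmain.trans (hmono hj))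
    rw [hDhat] at h1
    have h2 := pos_of_mul_pos_right h1 (hκ (σ j)).1
    obtain ⟨p, hp⟩ := exists_eq_ciInf_of_finite (f := fun p => f (σ j) p x)
    rw [← hp]
    have h3 : (⨅ p, max (f (σ j) p x) 0) ≤ max (f (σ j) p x) 0 :=
      ciInf_le (Set.finite_range (fun p => max (f (σ j) p x) 0)).bddBelow p
    have h4 := h2.trans_le h3
    simpa using h4
  have hsub : (((Finset.Ici (⟨k, hkN⟩ : Fin N)).map σ.toEmbedding : Finset (Fin N)) : Set (Fin N))
      ⊆ {i : Fin N | 0 < ⨅ p, f i p x} := by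
    intro i hi
    obtain ⟨j, hj, rfl⟩ := Finset.mem_map.1 (Finset.mem_coe.1 hi)
    exact hpos j (Finset.mem_Ici.1 hj)
  have hc := Set.ncard_le_ncard hsub (Set.toFinite _)
  rw [Set.ncard_coe_finset, Finset.card_map, Fin.card_Ici] at hc
  exact hc
end

section
/- The worst-case CVaR approximation with the weighting vector w* ∈ ℝ^P defined by w*_p := ‖b_p‖_*^{-1} / Σ_{l∈[P]} ‖b_l‖_*^{-1} is an inner approximation of the exact reformulation: X_WCVaR(w*) ⊆ X_Exact. -/
theorem linear_bound_aux {E : Type} [AddCommGroup E] [Module ℝ E] [FiniteDimensional ℝ E]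
    (nrm : E → ℝ)
    (nn : ∀ u, 0 ≤ nrm u)
    (nrm_eq_zero : ∀ u : E, nrm u = 0 ↔ u = 0)
    (nrm_smul : ∀ (c : ℝ) (u : E), nrm (c • u) = |c| * nrm u)
    (nrm_triangle : ∀ u w : E, nrm (u + w) ≤ nrm u + nrm w)
    (φ : E →ₗ[ℝ] ℝ) : ∃ C : ℝ, 0 ≤ C ∧ ∀ u, φ u ≤ C * nrm u := by
  let : Norm E := ⟨nrm⟩
  have core : NormedSpace.Core ℝ E :=
    { norm_nonneg := nn
      norm_smul := nrm_smul
      norm_triangle := nrm_triangle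
      norm_eq_zero_iff := nrm_eq_zero }
  let : NormedAddCommGroup E := NormedAddCommGroup.ofCore core
  let : NormedSpace ℝ E := NormedSpace.ofCore core
  refine ⟨‖LinearMap.toContinuousLinearMap φ‖, norm_nonneg _, fun u => ?_⟩
  exact (le_abs_self _).trans ((LinearMap.toContinuousLinearMap φ).le_opNorm u)

theorem stmt_14
    (N K L P : ℕ) (hN : 0 < N) (hK : 0 < K) (hL : 0 < L) (hP : 0 < P)
    (nrm : (Fin K → ℝ) → ℝ)
    (nrm_eq_zero : ∀ u : Fin K → ℝ, nrm u = 0 ↔ u = 0)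
    (nrm_smul : ∀ (c : ℝ) (u : Fin K → ℝ), nrm (c • u) = |c| * nrm u)
    (nrm_triangle : ∀ u w : Fin K → ℝ, nrm (u + w) ≤ nrm u + nrm w)
    (dstar : (Fin K → ℝ) → ℝ)
    (hdstar : ∀ v : Fin K → ℝ,
      dstar v = sSup ((fun u : Fin K → ℝ => ∑ j, v j * u j) '' {u | nrm u ≤ 1}))
    (ξ : Fin N → Fin K → ℝ)
    (a : Fin P → Fin L → ℝ) (b : Fin P → Fin K → ℝ) (hb : ∀ p, b p ≠ 0)
    (d : Fin P → ℝ)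
    (ε θ : ℝ) (hε0 : 0 < ε) (hε1 : ε < 1) (hθ : 0 < θ)
    (k : ℕ) (hk : k = ⌊ε * (N : ℝ)⌋₊) (hkN : k < N)
    (X : Set (Fin L → ℝ))
    (f : Fin N → Fin P → (Fin L → ℝ) → ℝ)
    (hf : ∀ i p x, f i p x =
      ((∑ j, b p j * ξ i j) + d p - ∑ j, a p j * x j) / dstar (b p))
    (XExact : Set (Fin L → ℝ))
    (hXExact : XExact = {x | x ∈ X ∧ ∃ s : ℝ, ∃ r : Fin N → ℝ,
      0 ≤ s ∧ (∀ i, 0 ≤ r i) ∧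
      ε * (N : ℝ) * s - ∑ i, r i ≥ θ * (N : ℝ) ∧
      ∀ i p, max (f i p x) 0 ≥ s - r i})
    (XWCVaR : (Fin P → ℝ) → Set (Fin L → ℝ))
    (hXWCVaR : ∀ w : Fin P → ℝ, XWCVaR w = {x | x ∈ X ∧ ∃ α : Fin N → ℝ, ∃ β τ : ℝ,
      (∀ i, 0 ≤ α i) ∧
      τ + (1 / ε) * (θ * β + (1 / (N : ℝ)) * ∑ i, α i) ≤ 0 ∧
      (∀ i p, α i ≥ w p * ((∑ j, a p j * x j) - (∑ j, b p j * ξ i j) - d p) - τ) ∧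
      ∀ p, β ≥ w p * dstar (b p)})
    :
    XWCVaR (fun p => (dstar (b p))⁻¹ / ∑ l, (dstar (b l))⁻¹) ⊆ XExact := by
  have h0 : nrm 0 = 0 := (nrm_eq_zero 0).2 rfl
  have nn : ∀ u, 0 ≤ nrm u := by
    intro u
    have h1 := nrm_triangle u ((-1 : ℝ) • u)
    rw [nrm_smul] at h1
    have h2 : u + (-1 : ℝ) • u = 0 := by simp
    rw [h2, h0] at h1
    norm_num at h1
    linarith
  have hpos : ∀ p, 0 < dstar (b p) := by
    intro p
    set v := b p with hv
    have hvv : 0 < ∑ j, v j * v j := by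
      obtain ⟨j, hj⟩ := Function.ne_iff.1 (hb p)
      exact Finset.sum_pos' (fun i _ => mul_self_nonneg _)
        ⟨j, Finset.mem_univ _, mul_self_pos.2 hj⟩
    have hnv : 0 < nrm v := lt_of_le_of_ne (nn v) (fun h => hb p ((nrm_eq_zero v).1 h.symm))
    obtain ⟨C, hC0, hC⟩ := linear_bound_aux nrm nn nrm_eq_zero nrm_smul nrm_triangle
      (∑ j, v j • (LinearMap.proj j : (Fin K → ℝ) →ₗ[ℝ] ℝ))
    have hbdd : BddAbove ((fun u : Fin K → ℝ => ∑ j, v j * u j) '' {u | nrm u ≤ 1}) := by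
      refine ⟨C, ?_⟩
      rintro _ ⟨u, hu, rfl⟩
      have h1 := hC u
      simp only [LinearMap.sum_apply, LinearMap.smul_apply, LinearMap.proj_apply,
        smul_eq_mul] at h1
      have hu' : nrm u ≤ 1 := hu
      exact h1.trans (mul_le_of_le_one_right hC0 hu')
    rw [hdstar]
    have hmem : (∑ j, v j * ((nrm v)⁻¹ • v) j) ∈
        ((fun u : Fin K → ℝ => ∑ j, v j * u j) '' {u | nrm u ≤ 1}) := by
      refine ⟨(nrm v)⁻¹ • v, ?_, rfl⟩
      change nrm _ ≤ 1
      rw [nrm_smul, abs_of_pos (inv_pos.2 hnv), inv_mul_cancel₀ hnv.ne']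
    refine lt_of_lt_of_le ?_ (le_csSup hbdd hmem)
    have : (∑ j, v j * ((nrm v)⁻¹ • v) j) = (nrm v)⁻¹ * ∑ j, v j * v j := by
      rw [Finset.mul_sum]
      refine Finset.sum_congr rfl fun j _ => ?_
      simp only [Pi.smul_apply, smul_eq_mul]
      ring
    rw [this]
    exact mul_pos (inv_pos.2 hnv) hvv
  have hc : 0 < ∑ l, (dstar (b l))⁻¹ :=
    Finset.sum_pos (fun l _ => inv_pos.2 (hpos l)) ⟨⟨0, hP⟩, Finset.mem_univ _⟩
  rw [hXWCVaR, hXExact]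
  generalize (∑ l, (dstar (b l))⁻¹) = c at hc
  rintro x ⟨hx, α, β, τ, hα, h1, h2, h3⟩
  have hNr : (0 : ℝ) < N := by exact_mod_cast hN
  have hβ : 1 ≤ c * β := by
    have h := h3 ⟨0, hP⟩
    have hp := hpos ⟨0, hP⟩
    have e : (dstar (b ⟨0, hP⟩))⁻¹ / c * dstar (b ⟨0, hP⟩) = 1 / c := by field_simp
    simp only [e] at h
    have := (div_le_iff₀ hc).1 h
    linarith
  have hβ0 : 0 < β := by
    by_contra hcon
    nlinarith
  have hS : 0 ≤ ∑ i, α i := Finset.sum_nonneg fun i _ => hα i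
  have key : ε * N * τ + θ * N * β + ∑ i, α i ≤ 0 := by
    have e : ε * N * τ + θ * N * β + ∑ i, α i
        = (ε * N) * (τ + (1 / ε) * (θ * β + (1 / (N : ℝ)) * ∑ i, α i)) := by
      field_simp
      ring
    rw [e]
    exact mul_nonpos_of_nonneg_of_nonpos (by positivity) h1
  have hτ : τ ≤ 0 := by
    by_contra hcon
    push Not at hcon
    have : 0 < ε * N * τ := by positivity
    have : 0 < θ * N * β := by positivity
    linarith
  refine ⟨hx, c * (-τ), fun i => c * α i, mul_nonneg hc.le (by linarith),
    fun i => mul_nonneg hc.le (hα i), ?_, ?_⟩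
  · rw [← Finset.mul_sum]
    have m1 := mul_le_mul_of_nonneg_left key hc.le
    have m2 := mul_le_mul_of_nonneg_left hβ (mul_pos hθ hNr).le
    nlinarith
  · intro i p
    refine le_trans ?_ (le_max_left _ _)
    have h := mul_le_mul_of_nonneg_left (h2 i p) hc.le
    have hp := hpos p
    have e : c * ((dstar (b p))⁻¹ / c * ((∑ j, a p j * x j) - (∑ j, b p j * ξ i j) - d p) - τ)
        = - f i p x - c * τ := by
      rw [hf]
      field_simp
      ring
    simp only [e] at h
    linarith
end

section
/- For every κ ∈ [0,1]^N, the Linear Approximation is an inner approximation of the exact reformulation: X_LA(κ) ⊆ X_Exact. -/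
theorem stmt_15
    (N K L P : ℕ) (hN : 0 < N) (hK : 0 < K) (hL : 0 < L) (hP : 0 < P)
    (nrm : (Fin K → ℝ) → ℝ)
    (nrm_eq_zero : ∀ u : Fin K → ℝ, nrm u = 0 ↔ u = 0)
    (nrm_smul : ∀ (c : ℝ) (u : Fin K → ℝ), nrm (c • u) = |c| * nrm u)
    (nrm_triangle : ∀ u w : Fin K → ℝ, nrm (u + w) ≤ nrm u + nrm w)
    (dstar : (Fin K → ℝ) → ℝ)
    (hdstar : ∀ v : Fin K → ℝ,
      dstar v = sSup ((fun u : Fin K → ℝ => ∑ j, v j * u j) '' {u | nrm u ≤ 1}))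
    (ξ : Fin N → Fin K → ℝ)
    (a : Fin P → Fin L → ℝ) (b : Fin P → Fin K → ℝ) (hb : ∀ p, b p ≠ 0)
    (d : Fin P → ℝ)
    (ε θ : ℝ) (hε0 : 0 < ε) (hε1 : ε < 1) (hθ : 0 < θ)
    (k : ℕ) (hk : k = ⌊ε * (N : ℝ)⌋₊) (hkN : k < N)
    (X : Set (Fin L → ℝ))
    (f : Fin N → Fin P → (Fin L → ℝ) → ℝ)
    (hf : ∀ i p x, f i p x =
      ((∑ j, b p j * ξ i j) + d p - ∑ j, a p j * x j) / dstar (b p))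
    (XExact : Set (Fin L → ℝ))
    (hXExact : XExact = {x | x ∈ X ∧ ∃ s : ℝ, ∃ r : Fin N → ℝ,
      0 ≤ s ∧ (∀ i, 0 ≤ r i) ∧
      ε * (N : ℝ) * s - ∑ i, r i ≥ θ * (N : ℝ) ∧
      ∀ i p, max (f i p x) 0 ≥ s - r i})
    (XLA : (Fin N → ℝ) → Set (Fin L → ℝ))
    (hXLA : ∀ κ : Fin N → ℝ, XLA κ = {x | x ∈ X ∧ ∃ s : ℝ, ∃ r : Fin N → ℝ,
      0 ≤ s ∧ (∀ i, 0 ≤ r i) ∧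
      ε * (N : ℝ) * s - ∑ i, r i ≥ θ * (N : ℝ) ∧
      ∀ i p, κ i * f i p x ≥ s - r i})
    :
    ∀ κ : Fin N → ℝ, (∀ i, 0 ≤ κ i ∧ κ i ≤ 1) → XLA κ ⊆ XExact := by
  intro κ hκ x hx
  rw [hXLA] at hx
  rw [hXExact]
  obtain ⟨hxX, s, r, hs, hr, hsum, h⟩ := hx
  refine ⟨hxX, s, r, hs, hr, hsum, fun i p => ?_⟩
  refine le_trans (h i p) ?_
  obtain ⟨h0, h1⟩ := hκ i
  rcases le_total 0 (f i p x) with hf0 | hf0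
  · exact le_trans (mul_le_of_le_one_left hf0 h1) (le_max_left _ _)
  · exact le_trans (mul_nonpos_of_nonneg_of_nonpos h0 hf0) (le_max_right _ _)
end
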